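/- Let k ≥ 2 be an integer and α > 0. There exists a constant c_k = c_k(α) such that the following holds: if H is a k-graph on n vertices, with n divisible by k−1, satisfying δ_{k−1}(H) ≥ αn, and p = c_k/n^{k−1}, then H ∪ 𝔾^{(k)}(n,p) is a.a.s. 1-Hamiltonian. -/

import Mathlib

open Finset
open scoped Classical

/-- All `k`-subsets of `Fin n` (the possible edges of a `k`-graph on `n` vertices). -/
def kSets (n k : ℕ) : Finset (Finset (Fin n)) := Finset.univ.powersetCard k

/-- The probability that the binomial random `k`-graph `G^{(k)}(n,p)` (each `k`-set is an
edge independently with probability `p`) has an edge set satisfying the property `A`. -/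
noncomputable def gProb (n k : ℕ) (p : ℝ) (A : Finset (Finset (Fin n)) → Prop) : ℝ :=
  ∑ E ∈ (kSets n k).powerset.filter (fun E => A E),
    p ^ E.card * (1 - p) ^ ((kSets n k).card - E.card)

/-- Expectation of a random variable `f` of the random `k`-graph `G^{(k)}(n,p)`. -/
noncomputable def gExpect (n k : ℕ) (p : ℝ) (f : Finset (Finset (Fin n)) → ℝ) : ℝ :=
  ∑ E ∈ (kSets n k).powerset,
    p ^ E.card * (1 - p) ^ ((kSets n k).card - E.card) * f E

/-- The degree of a vertex set `S` in the `k`-graph with edge set `E`: the number of edges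
containing `S` (equivalently, the number of `(k-|S|)`-sets `T` with `S ∪ T ∈ E`). -/
def degOf {n : ℕ} (E : Finset (Finset (Fin n))) (S : Finset (Fin n)) : ℕ :=
  (E.filter (fun e => S ⊆ e)).card

/-- The minimum vertex degree (minimum 1-degree) of a `k`-graph. -/
noncomputable def minVertexDeg {n : ℕ} (E : Finset (Finset (Fin n))) : ℕ :=
  sInf {d : ℕ | ∃ v : Fin n, degOf E {v} = d}

/-- The index set of the `i`-th edge of the path `P_{a,x}`:
`{x + i*d, x + i*d + 1, …, x + i*d + k - 1}` (here `d = k - ℓ`). -/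
def edgeIdx (k d x i : ℕ) : Finset ℕ := (Finset.range k).image (fun j => x + i * d + j)

/-- The ordered `b`-tuple `w` spans a labeled copy of `P_{a,x}` (the `k`-uniform `ℓ`-path
with `a` edges, preceded and followed by `x` isolated vertices) in the edge set `E`. -/
def SpansPax {n : ℕ} (k ℓ a x : ℕ) (E : Finset (Finset (Fin n))) {b : ℕ}
    (w : Fin b → Fin n) : Prop :=
  Function.Injective w ∧
  ∀ i < a,
    ((Finset.univ.filter (fun m : Fin b => (m : ℕ) ∈ edgeIdx k (k - ℓ) x i)).image w) ∈ E

/-- The ordered tuple `w` spans a labeled copy of the `ℓ`-path `P_a` of length `a` in `E`. -/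
def SpansPath {n : ℕ} (k ℓ a : ℕ) (E : Finset (Finset (Fin n))) {b : ℕ}
    (w : Fin b → Fin n) : Prop :=
  SpansPax k ℓ a 0 E w

/-- The first `ℓ`-end of the ordered tuple `w` (its first `ℓ` vertices, as a set). -/
def firstEnd {n b : ℕ} (ℓ : ℕ) (w : Fin b → Fin n) : Finset (Fin n) :=
  (Finset.univ.filter (fun m : Fin b => (m : ℕ) < ℓ)).image w

/-- The last `ℓ`-end of the ordered tuple `w` (its last `ℓ` vertices, as a set). -/
def lastEnd {n b : ℕ} (ℓ : ℕ) (w : Fin b → Fin n) : Finset (Fin n) :=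
  (Finset.univ.filter (fun m : Fin b => b - ℓ ≤ (m : ℕ))).image w

/-- The `k`-graph with edge set `E` on vertex set `Fin n` contains a Hamiltonian `ℓ`-cycle:
there is a cyclic ordering of all `n` vertices such that each of the `n/(k-ℓ)` edges
consists of `k` consecutive vertices, consecutive edges overlapping in `ℓ` vertices. -/
def IsHamCycle (n k ℓ : ℕ) (E : Finset (Finset (Fin n))) : Prop :=
  ∃ f : ZMod n → Fin n, Function.Bijective f ∧
    ∀ i < n / (k - ℓ),
      ((Finset.range k).image (fun j => f (((i * (k - ℓ) + j : ℕ) : ZMod n)))) ∈ E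

/-- The `ℓ`-shadow of a `k`-graph: all `ℓ`-sets contained in some edge. -/
def shadowL {n : ℕ} (ℓ : ℕ) (E : Finset (Finset (Fin n))) : Finset (Finset (Fin n)) :=
  (Finset.univ.powersetCard ℓ).filter (fun S => ∃ e ∈ E, S ⊆ e)

/-- The list `v` of vertices spans a copy of the `ℓ`-path `P_a` of length `a` in `E`. -/
def ListSpans {n : ℕ} (k ℓ a : ℕ) (E : Finset (Finset (Fin n))) (v : List (Fin n)) : Prop :=
  v.Nodup ∧ v.length = a * (k - ℓ) + ℓ ∧
    ∀ i < a, ((v.drop (i * (k - ℓ))).take k).toFinset ∈ E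

/-- `Φ_F(n,p) = min { n^{v_H} p^{e_H} : H ⊆ F, e_H > 0 }`, where the subgraph `H` is given
by a nonempty edge set `E' ⊆ F` together with a vertex set `W` containing all its edges. -/
noncomputable def Phi {V : Type*} (n : ℕ) (p : ℝ) (F : Finset (Finset V)) : ℝ :=
  sInf {r : ℝ | ∃ (W : Finset V) (E' : Finset (Finset V)),
    E' ⊆ F ∧ E'.Nonempty ∧ (∀ e ∈ E', e ⊆ W) ∧ r = (n : ℝ) ^ W.card * p ^ E'.card}

/-- The ordered tuple `w` spans a labeled copy of the `k`-graph `F` (given by its edge set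
`Fe` on vertex set `Fin s`) in the edge set `E`. -/
def SpansCopy {n s : ℕ} (Fe : Finset (Finset (Fin s))) (E : Finset (Finset (Fin n)))
    (w : Fin s → Fin n) : Prop :=
  ∀ e ∈ Fe, e.image w ∈ E

/-- Concatenation of three ordered tuples. -/
def concat3 {n p q r : ℕ} (A : Fin p → Fin n) (C : Fin q → Fin n) (B : Fin r → Fin n)
    (m : Fin (p + q + r)) : Fin n :=
  if h : (m : ℕ) < p then A ⟨(m : ℕ), h⟩
  else if h2 : (m : ℕ) < p + q then C ⟨(m : ℕ) - p, by omega⟩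
  else B ⟨(m : ℕ) - (p + q), by have := m.isLt; omega⟩

/-- `w`, spanning an `ℓ`-path of length `a`, is a `W`-absorber in `E`: it avoids `W`, and
its vertex set together with `W` spans an `ℓ`-path (of length `a+1` when `|W| = k - ℓ`)
with the same two `ℓ`-ends. -/
def IsAbsorber {n : ℕ} (k ℓ a : ℕ) (E : Finset (Finset (Fin n))) {b : ℕ}
    (w : Fin b → Fin n) (W : Finset (Fin n)) : Prop :=
  (∀ m, w m ∉ W) ∧
  ∃ w' : Fin (b + W.card) → Fin n, SpansPath k ℓ (a + 1) E w' ∧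
    Finset.image w' Finset.univ = Finset.image w Finset.univ ∪ W ∧
    firstEnd ℓ w' = firstEnd ℓ w ∧ lastEnd ℓ w' = lastEnd ℓ w

/-!
Let `G` be the random graph. By a union bound over families of disjoint linear-sized sets, `G` has
an edge across every such family. From this property alone, depth-first search in `G` finds loose
paths covering all but few vertices of any given set. The codegree condition on `H` makes every
vertex exchangeable with many others, so a greedy choice of edges of `H`, halving the weight of each
vertex that an edge can serve, yields after linking these edges through `G` a short loose path able
to absorb any small set of leftover vertices. Closing up the absorbing path and a long path through
the remaining vertices, then absorbing what is left, gives the Hamilton cycle.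
-/

section LooseWalks

variable {V : Type*}

/-- The multiset `s` is the vertex set of an edge of `E`. Edges are compared with multisets so
that listing the vertices of an edge also records that they are distinct. -/
def IsEdge (E : Finset (Finset V)) (s : Multiset V) : Prop := ∃ e ∈ E, e.val = s

/-- One edge of a walk in which consecutive edges share a single vertex: it is entered at `source`
and left at `target`, and its other vertices are split into `slot` and `body`. The absorption
argument exchanges the vertex in `slot`, when there is one. -/
structure Link (V : Type*) where
  /-- The vertex shared with the preceding edge. -/
  source : V
  /-- The vertex shared with the following edge. -/
  target : V
  /-- The exchangeable inner vertex, if any. -/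
  slot : Multiset V
  /-- The remaining inner vertices. -/
  body : Multiset V

/-- The vertices that a link adds to the walk it extends. -/
def Link.newVerts (l : Link V) : Multiset V := l.target ::ₘ (l.slot + l.body)

/-- The same edge, traversed backwards. -/
def Link.reverse (l : Link V) : Link V := ⟨l.target, l.source, l.slot, l.body⟩

/-- The vertices of a walk other than its first one, with multiplicity. -/
def newVerts (D : List (Link V)) : Multiset V := (D.map Link.newVerts).sum

/-- The links of a walk traversed backwards. -/
def reversal (D : List (Link V)) : List (Link V) := (D.map Link.reverse).reverse

/-- `D` is the list of links of a loose walk (a `1`-walk) from `a` to `b` with edges in `E`;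
vertices may repeat. -/
def IsLooseWalk (E : Finset (Finset V)) : V → List (Link V) → V → Prop
  | a, [], b => a = b
  | a, l :: D, b => l.source = a ∧ IsEdge E (a ::ₘ l.newVerts) ∧ IsLooseWalk E l.target D b

/-- A loose walk without repeated vertices, that is, a `1`-path of the `k`-graph `E`. -/
def IsLoosePath (E : Finset (Finset V)) (a : V) (D : List (Link V)) (b : V) : Prop :=
  IsLooseWalk E a D b ∧ (a ::ₘ newVerts D).Nodup

variable {E E' : Finset (Finset V)} {s : Multiset V} {a b c v : V} {l : Link V}
  {D D' : List (Link V)} {r : ℕ}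

theorem IsEdge.nodup (h : IsEdge E s) : s.Nodup := by
  obtain ⟨e, _, rfl⟩ := h
  exact e.nodup

theorem IsEdge.mono (hE : E ⊆ E') (h : IsEdge E s) : IsEdge E' s := by
  obtain ⟨e, he, rfl⟩ := h
  exact ⟨e, hE he, rfl⟩

theorem IsEdge.card_eq (hE : (E : Set (Finset V)).Sized r) (h : IsEdge E s) :
    Multiset.card s = r := by
  obtain ⟨e, he, rfl⟩ := h
  exact hE he

theorem isEdge_iff_toFinset_mem [DecidableEq V] : IsEdge E s ↔ s.Nodup ∧ s.toFinset ∈ E := by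
  constructor
  · rintro ⟨e, he, rfl⟩
    exact ⟨e.nodup, by rwa [val_toFinset]⟩
  · rintro ⟨hs, he⟩
    exact ⟨_, he, by rw [Multiset.toFinset_val, hs.dedup]⟩

@[simp] theorem newVerts_nil : newVerts ([] : List (Link V)) = 0 := rfl

@[simp] theorem newVerts_cons : newVerts (l :: D) = l.newVerts + newVerts D := by
  simp [newVerts]

@[simp] theorem newVerts_append : newVerts (D ++ D') = newVerts D + newVerts D' := by
  simp [newVerts]

theorem newVerts_eq_targets_add :
    newVerts D = D.map Link.target + ((D.map Link.slot).sum + (D.map Link.body).sum) := by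
  induction D with
  | nil => rfl
  | cons l D ih =>
    simp only [newVerts_cons, Link.newVerts, List.map_cons, List.sum_cons, ih,
      ← Multiset.cons_coe, ← Multiset.singleton_add]
    abel

theorem reversal_cons : reversal (l :: D) = reversal D ++ [l.reverse] := by simp [reversal]

theorem reversal_append : reversal (D ++ D') = reversal D' ++ reversal D := by simp [reversal]

@[simp] theorem length_reversal : (reversal D).length = D.length := by simp [reversal]

theorem reversal_reversal (D : List (Link V)) : reversal (reversal D) = D := by
  simp [reversal, Function.comp_def, Link.reverse]

theorem isLooseWalk_append :
    IsLooseWalk E a (D ++ D') c ↔ ∃ b, IsLooseWalk E a D b ∧ IsLooseWalk E b D' c := by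
  induction D generalizing a with
  | nil => simp [IsLooseWalk]
  | cons l D ih => simp [IsLooseWalk, ih, and_assoc]

theorem IsLooseWalk.mono (hE : E ⊆ E') (h : IsLooseWalk E a D b) : IsLooseWalk E' a D b := by
  induction D generalizing a with
  | nil => exact h
  | cons l D ih => exact ⟨h.1, h.2.1.mono hE, ih h.2.2⟩

theorem IsLooseWalk.cons_newVerts_eq (h : IsLooseWalk E a D b) :
    a ::ₘ newVerts D = b ::ₘ newVerts (reversal D) := by
  induction D generalizing a with
  | nil => cases h; rfl
  | cons l D ih =>
    obtain ⟨rfl, -, h⟩ := h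
    rw [reversal_cons, newVerts_append, ← Multiset.cons_add, ← ih h]
    simp only [newVerts_cons, newVerts_nil, Link.newVerts, Link.reverse, add_zero,
      ← Multiset.singleton_add]
    abel

theorem IsLooseWalk.reverse (h : IsLooseWalk E a D b) : IsLooseWalk E b (reversal D) a := by
  induction D generalizing a with
  | nil => exact Eq.symm h
  | cons l D ih =>
    obtain ⟨rfl, hl, h⟩ := h
    rw [reversal_cons, isLooseWalk_append]
    exact ⟨l.target, ih h, rfl, by rwa [Link.newVerts, Multiset.cons_swap] at hl, rfl⟩

theorem IsLooseWalk.end_mem (h : IsLooseWalk E a D b) : b ∈ a ::ₘ newVerts D :=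
  h.cons_newVerts_eq ▸ Multiset.mem_cons_self _ _

theorem IsLooseWalk.card_newVerts (hE : (E : Set (Finset V)).Sized (r + 2))
    (h : IsLooseWalk E a D b) : Multiset.card (newVerts D) = (r + 1) * D.length := by
  induction D generalizing a with
  | nil => simp
  | cons l D ih =>
    have hl := h.2.1.card_eq hE
    rw [Multiset.card_cons] at hl
    rw [newVerts_cons, Multiset.card_add, ih h.2.2, List.length_cons]
    linarith

theorem IsLooseWalk.end_mem_newVerts (h : IsLooseWalk E a D b) (hD : D ≠ []) :
    b ∈ newVerts D := by
  obtain ⟨l, D, rfl⟩ := List.exists_cons_of_ne_nil hD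
  rw [newVerts_cons, Link.newVerts, Multiset.cons_add]
  have := h.2.2.end_mem
  simp only [Multiset.mem_cons, Multiset.mem_add] at this ⊢
  tauto

theorem IsLoosePath.mono (hE : E ⊆ E') (h : IsLoosePath E a D b) : IsLoosePath E' a D b :=
  ⟨h.1.mono hE, h.2⟩

theorem IsLoosePath.nil (E : Finset (Finset V)) (a : V) : IsLoosePath E a [] a := by
  simp [IsLoosePath, IsLooseWalk]

theorem IsLoosePath.reverse (h : IsLoosePath E a D b) : IsLoosePath E b (reversal D) a :=
  ⟨h.1.reverse, h.1.cons_newVerts_eq ▸ h.2⟩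

theorem IsLoosePath.append (h : IsLoosePath E a D b) (h' : IsLooseWalk E b D' c)
    (hD' : (newVerts D').Nodup) (hdisj : ∀ u ∈ newVerts D', u ∉ a ::ₘ newVerts D) :
    IsLoosePath E a (D ++ D') c := by
  refine ⟨isLooseWalk_append.2 ⟨b, h.1, h'⟩, ?_⟩
  rw [newVerts_append, ← Multiset.cons_add, Multiset.nodup_add]
  exact ⟨h.2, hD', Multiset.disjoint_left.2 fun hu hu' => hdisj _ hu' hu⟩

theorem IsLoosePath.nodup_targets (h : IsLoosePath E a D b) : (D.map Link.target).Nodup := by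
  have := (Multiset.nodup_cons.1 h.2).2
  rw [newVerts_eq_targets_add, Multiset.nodup_add] at this
  exact this.1

theorem IsLoosePath.nodup_slots (h : IsLoosePath E a D b) : (D.map Link.slot).sum.Nodup := by
  have := (Multiset.nodup_cons.1 h.2).2
  rw [newVerts_eq_targets_add, Multiset.nodup_add, Multiset.nodup_add] at this
  exact this.2.1.1

end LooseWalks

section CrossingEdges

variable {V : Type*}

theorem exists_pairwise_disjoint_subsets_card_eq {ι : Type*} [Fintype ι] {N : ℕ}
    {C : ι → Finset V} (hC : ∀ j, Fintype.card ι * N ≤ #(C j)) :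
    ∃ B : ι → Finset V, (∀ j, B j ⊆ C j) ∧ (∀ j, #(B j) = N) ∧
      Pairwise (Function.onFun Disjoint B) := by
  obtain ⟨f, hf, hfC⟩ := (all_card_le_biUnion_card_iff_exists_injective
    fun p : ι × Fin N => C p.1).1 fun s => by
      obtain rfl | ⟨p, hp⟩ := s.eq_empty_or_nonempty
      · simp
      · calc #s ≤ Fintype.card (ι × Fin N) := card_le_univ s
          _ = Fintype.card ι * N := by simp
          _ ≤ #(C p.1) := hC p.1
          _ ≤ _ := card_le_card (subset_biUnion_of_mem (fun p : ι × Fin N => C p.1) hp)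
  refine ⟨fun j => univ.image fun i => f (j, i), fun j => ?_, fun j => ?_, fun i j hij => ?_⟩
  · exact image_subset_iff.2 fun i _ => hfC (j, i)
  · rw [card_image_of_injective _ fun i i' h => (Prod.ext_iff.1 (hf h)).2, card_univ,
      Fintype.card_fin]
  · simp only [Function.onFun, disjoint_left, mem_image, mem_univ, true_and]
    rintro _ ⟨i', rfl⟩ ⟨j', h⟩
    exact hij (Prod.ext_iff.1 (hf h)).1.symm

/-- Any `k` vertex sets with at least `N` elements each, disjoint or not, have a system of
distinct representatives that is an edge of `G`. This is the pseudorandomness of the random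
hypergraph on which the whole argument rests. -/
def HasCrossingEdges (G : Finset (Finset V)) (N k : ℕ) : Prop :=
  ∀ C : Fin k → Finset V, (∀ j, N ≤ #(C j)) →
    ∃ c : Fin k → V, (∀ j, c j ∈ C j) ∧ IsEdge G (univ.val.map c)

variable {G : Finset (Finset V)} {N k r : ℕ}

theorem hasCrossingEdges_of_pairwise_disjoint [DecidableEq V]
    (h : ∀ B : Fin k → Finset V, (∀ j, #(B j) = N) → Pairwise (Function.onFun Disjoint B) →
      ∃ c : Fin k → V, (∀ j, c j ∈ B j) ∧ univ.image c ∈ G) :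
    HasCrossingEdges G (k * N) k := by
  intro C hC
  obtain ⟨B, hBC, hBcard, hB⟩ :=
    exists_pairwise_disjoint_subsets_card_eq (C := C) (N := N) (by simpa using hC)
  obtain ⟨c, hcB, hcG⟩ := h B hBcard hB
  refine ⟨c, fun j => hBC j (hcB j), _, hcG, image_val_of_injOn fun i _ j _ hij => ?_⟩
  by_contra hne
  exact disjoint_left.1 (hB hne) (hcB i) (hij ▸ hcB j)

theorem HasCrossingEdges.exists_isEdge_cons (hG : HasCrossingEdges G N (k + 1)) {X : Finset V}
    {C : Fin k → Finset V} (hX : N ≤ #X) (hC : ∀ j, N ≤ #(C j)) :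
    ∃ x ∈ X, ∃ c : Fin k → V, (∀ j, c j ∈ C j) ∧ IsEdge G (x ::ₘ univ.val.map c) := by
  obtain ⟨c, hc, hcG⟩ := hG (Fin.cons X C) (Fin.cases hX hC)
  refine ⟨c 0, hc 0, fun j => c j.succ, fun j => hc j.succ, ?_⟩
  simpa only [Fin.univ_val_map, List.ofFn_succ, Multiset.cons_coe] using hcG

theorem HasCrossingEdges.exists_isEdge_cons_cons (hG : HasCrossingEdges G N (r + 2))
    {X Y : Finset V} {C : Fin r → Finset V} (hX : N ≤ #X) (hY : N ≤ #Y)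
    (hC : ∀ j, N ≤ #(C j)) :
    ∃ x ∈ X, ∃ y ∈ Y, ∃ c : Fin r → V, (∀ j, c j ∈ C j) ∧
      IsEdge G (x ::ₘ y ::ₘ univ.val.map c) := by
  obtain ⟨x, hx, c, hc, hcG⟩ :=
    hG.exists_isEdge_cons (C := Fin.cons Y C) hX (Fin.cases hY hC)
  refine ⟨x, hx, c 0, hc 0, fun j => c j.succ, fun j => hc j.succ, ?_⟩
  simpa only [Fin.univ_val_map, List.ofFn_succ, Multiset.cons_coe] using hcG

theorem HasCrossingEdges.exists_isEdge_of_card_le (hG : HasCrossingEdges G N (k + 1))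
    {X U : Finset V} (hX : N ≤ #X) (hU : N ≤ #U) :
    ∃ x ∈ X, ∃ M : Multiset V, (∀ u ∈ M, u ∈ U) ∧ IsEdge G (x ::ₘ M) := by
  obtain ⟨x, hx, c, hc, hcG⟩ := hG.exists_isEdge_cons hX fun _ => hU
  exact ⟨x, hx, _, by simpa using hc, hcG⟩

end CrossingEdges

section Gateways

variable {V : Type*}

/-- `L` is a loose walk from `a` to `b` whose inner vertices are distinct and lie in `S`. -/
def IsLooseWalkThrough (E : Finset (Finset V)) (S : Set V) (a : V) (L : List (Link V)) (b : V) :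
    Prop :=
  IsLooseWalk E a L b ∧ ∃ M : Multiset V, newVerts L = b ::ₘ M ∧ M.Nodup ∧ ∀ u ∈ M, u ∈ S

/-- Inside `S` the vertex `c` can be joined, by a walk with two edges, to some vertex of any given
set of at least `N` vertices. -/
def IsGateway (E : Finset (Finset V)) (N : ℕ) (c : V) (S : Finset V) : Prop :=
  ∀ Y : Finset V, N ≤ #Y → ∃ y ∈ Y, ∃ L : List (Link V), L.length = 2 ∧ IsLooseWalkThrough E S c L y

variable {H G E : Finset (Finset V)} {S F A : Finset V} {N d r : ℕ} {a b c v x y : V}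
  {D : List (Link V)}

theorem IsLoosePath.isLooseWalkThrough_reversal {S : Set V} (hD : IsLoosePath E a D c)
    (hac : a ≠ c) (hS : ∀ u ∈ newVerts D, u ≠ c → u ∈ S) :
    IsLooseWalkThrough E S c (reversal D) a := by
  have hc : c ∈ newVerts D := (Multiset.mem_cons.1 hD.1.end_mem).resolve_left hac.symm
  obtain ⟨M, hM⟩ := Multiset.exists_cons_of_mem hc
  have hnodup := Multiset.nodup_cons.1 (hM ▸ (Multiset.nodup_cons.1 hD.2).2)
  refine ⟨hD.1.reverse, M, ?_, hnodup.2, fun u hu => ?_⟩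
  · rw [← Multiset.cons_inj_right c, ← hD.1.cons_newVerts_eq, hM, Multiset.cons_swap]
  · exact hS u (hM ▸ Multiset.mem_cons_of_mem hu) fun huc => hnodup.1 (huc ▸ hu)

theorem IsGateway.exists_isLoosePath (hgate : IsGateway E N c S) (hD : IsLoosePath E b D a)
    (hN : N ≤ D.length) (hDS : ∀ u ∈ newVerts D, u ∉ S) (hcS : c ∉ S) (hcD : c ∉ newVerts D) :
    ∃ D' : List (Link V), IsLoosePath E c D' a ∧ D.length ≤ D'.length + N ∧
      ∀ u ∈ newVerts D', u ∈ S ∨ u ∈ newVerts D := by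
  set Y := ((D.take N).map Link.target).toFinset with hYdef
  have hYcard : #Y = N := by
    rw [List.toFinset_card_of_nodup]
    · simp [hN]
    · exact hD.nodup_targets.sublist ((List.take_sublist N D).map _)
  have hYD : ∀ u ∈ Y, ∃ l ∈ D.take N, l.target = u := by
    simp [hYdef, -List.map_take]
  obtain ⟨y, hy, L, -, hL, M, hLM, hM, hMS⟩ := hgate Y hYcard.ge
  obtain ⟨l, hl, rfl⟩ := hYD y hy
  obtain ⟨P, Q, hDeq, hQlen⟩ : ∃ P Q, D = P ++ l :: Q ∧ D.length ≤ Q.length + N := by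
    obtain ⟨P, P', hP⟩ := List.append_of_mem hl
    refine ⟨P, P' ++ D.drop N, ?_, by simp only [List.length_append, List.length_drop]; lia⟩
    rw [← List.cons_append, ← List.append_assoc, ← hP, List.take_append_drop]
  obtain ⟨_, -, -, -, hQ⟩ := isLooseWalk_append.1 (hDeq ▸ hD.1)
  have hle : l.target ::ₘ newVerts Q ≤ newVerts D := by
    rw [hDeq, newVerts_append, newVerts_cons, Link.newVerts, Multiset.cons_add]
    exact (Multiset.cons_le_cons _ (Multiset.le_add_left _ _)).trans (Multiset.le_add_left _ _)
  have hnew : newVerts (L ++ Q) = M + (l.target ::ₘ newVerts Q) := by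
    rw [newVerts_append, hLM, Multiset.cons_add, Multiset.add_cons]
  have hmem : ∀ u ∈ newVerts (L ++ Q), u ∈ S ∨ u ∈ newVerts D := by
    rw [hnew]
    exact fun u hu => (Multiset.mem_add.1 hu).imp (hMS u) fun h => Multiset.mem_of_le hle h
  refine ⟨L ++ Q, ⟨isLooseWalk_append.2 ⟨_, hL, hQ⟩, ?_⟩,
    by rw [List.length_append]; lia, hmem⟩
  rw [Multiset.nodup_cons]
  refine ⟨fun h => (hmem c h).elim hcS hcD, ?_⟩
  rw [hnew, Multiset.nodup_add]
  exact ⟨hM, Multiset.nodup_of_le hle (Multiset.nodup_cons.1 hD.2).2,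
    Multiset.disjoint_left.2 fun hu hu' => hDS _ (Multiset.mem_of_le hle hu') (hMS _ hu)⟩

theorem IsGateway.exists_isLoosePath_between {S' : Finset V} {e : V} (hgate : IsGateway E N c S)
    (hgate' : IsGateway E N a S') (hD : IsLoosePath E b D e) (hlen : 2 * N ≤ D.length)
    (hac : a ≠ c) (haS : a ∉ S) (hcS : c ∉ S) (haS' : a ∉ S') (hcS' : c ∉ S')
    (hSS' : ∀ u ∈ S, u ∉ S') (hDmem : ∀ u ∈ b ::ₘ newVerts D, u ≠ a ∧ u ≠ c ∧ u ∉ S ∧ u ∉ S') :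
    ∃ D' : List (Link V), IsLoosePath E a D' c ∧ D.length ≤ D'.length + 2 * N ∧
      ∀ u ∈ newVerts D', u = c ∨ u ∈ S ∨ u ∈ S' ∨ u ∈ b ::ₘ newVerts D := by
  obtain ⟨D₁, hD₁, hlen₁, hmem₁⟩ := hgate.exists_isLoosePath hD (by lia)
    (fun u hu => (hDmem u (Multiset.mem_cons_of_mem hu)).2.2.1) hcS
    (fun h => (hDmem c (Multiset.mem_cons_of_mem h)).2.1 rfl)
  have hrev : ∀ u ∈ newVerts (reversal D₁), u = c ∨ u ∈ S ∨ u ∈ b ::ₘ newVerts D := by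
    intro u hu
    have := Multiset.mem_cons_of_mem (b := e) hu
    rw [← hD₁.1.cons_newVerts_eq, Multiset.mem_cons] at this
    exact this.imp_right fun hu => (hmem₁ u hu).imp_right Multiset.mem_cons_of_mem
  obtain ⟨D₂, hD₂, hlen₂, hmem₂⟩ := hgate'.exists_isLoosePath hD₁.reverse
    (by rw [length_reversal]; lia)
    (fun u hu => by
      obtain rfl | hu | hu := hrev u hu
      exacts [hcS', hSS' u hu, (hDmem u hu).2.2.2]) haS'
    (fun h => by
      obtain h | h | h := hrev a h
      exacts [hac h, haS h, (hDmem a h).1 rfl])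
  rw [length_reversal] at hlen₂
  refine ⟨D₂, hD₂, by lia, fun u hu => ?_⟩
  have := hmem₂ u hu
  have := hrev u
  tauto

variable [Fintype V]

theorem exists_card_eq_disjoint (h : #F + r ≤ Fintype.card V) :
    ∃ A : Finset V, #A = r ∧ Disjoint A F := by
  obtain ⟨A, hAF, hA⟩ := exists_subset_card_eq (s := Fᶜ) (n := r) (by rw [card_compl]; lia)
  exact ⟨A, hA, disjoint_left.2 fun u hu => mem_compl.1 (hAF hu)⟩

variable [DecidableEq V]

/-- The vertices that complete the set `S` to an edge of `H`. -/
def nbrs (H : Finset (Finset V)) (S : Finset V) : Finset V := {x | x ∉ S ∧ insert x S ∈ H}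

theorem isEdge_of_mem_nbrs_insert (hb : b ∉ A) (hx : x ∈ nbrs H (insert b A)) :
    IsEdge H (b ::ₘ x ::ₘ A.val) := by
  rw [nbrs, mem_filter_univ] at hx
  exact ⟨_, hx.2, by
    rw [insert_val_of_notMem hx.1, insert_val_of_notMem hb, Multiset.cons_swap]⟩

theorem exists_subset_nbrs_insert (hd : ∀ S : Finset V, #S = r + 1 → d ≤ #(nbrs H S))
    (hA : #A = r) (hc : c ∉ A) (hF : #F + N ≤ d) :
    ∃ X ⊆ nbrs H (insert c A), #X = N ∧ Disjoint X F := by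
  have hcard := hd (insert c A) (by rw [card_insert_of_notMem hc, hA])
  obtain ⟨X, hXF, hX⟩ := exists_subset_card_eq (s := nbrs H (insert c A) \ F) (n := N)
    (by have := le_card_sdiff F (nbrs H (insert c A)); lia)
  exact ⟨X, hXF.trans sdiff_subset, hX, disjoint_left.2 fun u hu => (mem_sdiff.1 (hXF hu)).2⟩

theorem exists_isGateway (hG : HasCrossingEdges G N (r + 2))
    (hd : ∀ S : Finset V, #S = r + 1 → d ≤ #(nbrs H S)) (hdV : d ≤ Fintype.card V)
    (hc : c ∈ F) (hF : #F + r + N ≤ d) :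
    ∃ S : Finset V, Disjoint S F ∧ #S ≤ r + N ∧ IsGateway (H ∪ G) N c S := by
  obtain ⟨A, hA, hAF⟩ := exists_card_eq_disjoint (F := F) (r := r) (by lia)
  have hcA : c ∉ A := fun h => disjoint_left.1 hAF h hc
  obtain ⟨X, hXnbrs, hX, hXF⟩ :=
    exists_subset_nbrs_insert (F := F) (N := N) hd hA hcA (by lia)
  have hXA : ∀ u ∈ X, u ∉ A := fun u hu huA => by
    have := hXnbrs hu
    rw [nbrs, mem_filter_univ] at this
    exact this.1 (mem_insert_of_mem huA)
  refine ⟨A ∪ X, disjoint_union_left.2 ⟨hAF, hXF⟩, by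
    rw [← hA, ← hX]; exact card_union_le A X, fun Y hY => ?_⟩
  obtain ⟨x, hx, y, hy, q, hq, hedge⟩ :=
    hG.exists_isEdge_cons_cons (C := fun _ => X) hX.ge hY fun _ => hX.ge
  have hQX : ∀ u ∈ univ.val.map q, u ∈ X := by simpa using hq
  refine ⟨y, hy, [⟨c, x, 0, A.val⟩, ⟨x, y, 0, univ.val.map q⟩], rfl, ⟨rfl, ?_, rfl, ?_, rfl⟩,
    x ::ₘ (A.val + univ.val.map q), ?_, ?_, ?_⟩
  · simpa [Link.newVerts] using
      (isEdge_of_mem_nbrs_insert hcA (hXnbrs hx)).mono subset_union_left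
  · simpa [Link.newVerts] using hedge.mono subset_union_right
  · simp only [newVerts_cons, newVerts_nil, Link.newVerts, ← Multiset.singleton_add]
    abel
  · obtain ⟨hxQ, hyQ⟩ := Multiset.nodup_cons.1 hedge.nodup
    rw [Multiset.nodup_cons, Multiset.nodup_add, Multiset.mem_add, not_or]
    exact ⟨⟨hXA x hx, fun h => hxQ (Multiset.mem_cons_of_mem h)⟩, A.nodup,
      (Multiset.nodup_cons.1 hyQ).2, Multiset.disjoint_right.2 fun hu => hXA _ (hQX _ hu)⟩
  · simp only [Multiset.mem_cons, Multiset.mem_add, coe_union, Set.mem_union, mem_coe]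
    rintro u (rfl | hu | hu)
    exacts [.inr hx, .inl hu, .inr (hQX u hu)]

theorem exists_isLooseWalkThrough_compl (hG : HasCrossingEdges G N (r + 2))
    (hd : ∀ S : Finset V, #S = r + 1 → d ≤ #(nbrs H S)) (hdV : d ≤ Fintype.card V)
    (hb : b ∈ F) (hv : v ∈ F) (hF : #F + 2 * (r + N) ≤ d) :
    ∃ L : List (Link V), L.length = 3 ∧ IsLooseWalkThrough (H ∪ G) (↑F)ᶜ b L v := by
  obtain ⟨A, hA, hAF⟩ := exists_card_eq_disjoint (F := F) (r := r) (by lia)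
  have hvA : v ∉ A := fun h => disjoint_left.1 hAF h hv
  obtain ⟨Y, hYnbrs, hY, hYF⟩ :=
    exists_subset_nbrs_insert (F := F) (N := N) hd hA hvA (by lia)
  obtain ⟨S, hS, -, hgate⟩ := exists_isGateway (F := F ∪ (A ∪ Y)) (c := b) hG hd hdV
    (mem_union_left _ hb) (by have := card_union_le F (A ∪ Y); have := card_union_le A Y; lia)
  rw [disjoint_union_right, disjoint_union_right] at hS
  obtain ⟨hSF, hSA, hSY⟩ := hS
  obtain ⟨y, hy, L, hL, hwalk, M, hLM, hM, hMS⟩ := hgate Y hY.ge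
  have hedge := isEdge_of_mem_nbrs_insert hvA (hYnbrs hy)
  have hyA := (Multiset.nodup_cons.1 (Multiset.nodup_cons.1 hedge.nodup).2).1
  refine ⟨L ++ [⟨y, v, 0, A.val⟩], by simp [hL], isLooseWalk_append.2 ⟨y, hwalk, ?_⟩,
    y ::ₘ (M + A.val), ?_, ?_, ?_⟩
  · exact ⟨rfl, by
      simpa [Link.newVerts, Multiset.cons_swap y v] using hedge.mono subset_union_left, rfl⟩
  · simp only [newVerts_append, newVerts_cons, newVerts_nil, Link.newVerts, hLM,
      ← Multiset.singleton_add]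
    abel
  · rw [Multiset.nodup_cons, Multiset.nodup_add, Multiset.mem_add, not_or]
    exact ⟨⟨fun h => disjoint_left.1 hSY (hMS y h) hy, hyA⟩, hM, A.nodup,
      Multiset.disjoint_left.2 fun hu => disjoint_left.1 hSA (hMS _ hu)⟩
  · simp only [Multiset.mem_cons, Multiset.mem_add, Set.mem_compl_iff, mem_coe]
    rintro u (rfl | hu | hu)
    exacts [disjoint_left.1 hYF hy, disjoint_left.1 hSF (hMS u hu), disjoint_left.1 hAF hu]

end Gateways

section LongPaths

variable {V : Type*}

/-- A state of the depth-first search for a long path of the `(r + 2)`-graph `G` inside `V₀`: the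
current path `D`, growing at its first vertex `b`, the set `Z` of vertices from which the search
has retreated, and a set `U` of unvisited vertices. A retreat discards `r + 1` vertices but puts
only one of them into `Z`. -/
structure IsDFSState (G : Finset (Finset V)) (V₀ : Finset V) (r : ℕ) (b : V) (D : List (Link V))
    (a : V) (Z U : Finset V) : Prop where
  isLoosePath : IsLoosePath G b D a
  mem_of_mem_path : ∀ u ∈ b ::ₘ newVerts D, u ∈ V₀ ∧ u ∉ Z ∧ u ∉ U
  mem_of_mem_unvisited : ∀ u ∈ U, u ∈ V₀ ∧ u ∉ Z
  not_isEdge : ∀ z ∈ Z, ∀ M : Multiset V, (∀ u ∈ M, u ∈ U) → ¬IsEdge G (z ::ₘ M)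
  card_le : #V₀ ≤ Multiset.card (b ::ₘ newVerts D) + #U + (r + 1) * #Z

namespace IsDFSState

variable {G : Finset (Finset V)} {V₀ Z U : Finset V} {r N : ℕ} {a b v : V} {l : Link V}
  {D : List (Link V)} {M : Multiset V}

theorem extend (h : IsDFSState G V₀ r b D a Z U) (hG : (G : Set (Finset V)).Sized (r + 2))
    (hM : ∀ u ∈ M, u ∈ U) (hedge : IsEdge G (b ::ₘ M)) :
    ∃ b' l U', IsDFSState G V₀ r b' (l :: D) a Z U' ∧ #U' < #U := by
  have hMcard : Multiset.card M = r + 1 := by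
    simpa only [Multiset.card_cons, Nat.succ.injEq] using hedge.card_eq hG
  have hMnodup := (Multiset.nodup_cons.1 hedge.nodup).2
  obtain ⟨y, hy⟩ := Multiset.card_pos_iff_exists_mem.1 (by lia : 0 < Multiset.card M)
  obtain ⟨M', rfl⟩ := Multiset.exists_cons_of_mem hy
  have hverts : y ::ₘ newVerts (⟨y, b, 0, M'⟩ :: D) = (y ::ₘ M') + (b ::ₘ newVerts D) := by
    simp only [newVerts_cons, Link.newVerts, ← Multiset.singleton_add]
    abel
  have hU := card_sdiff_add_card_eq_card (t := U) (s := (y ::ₘ M').toFinset)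
    fun u hu => hM u (Multiset.mem_toFinset.1 hu)
  rw [Multiset.toFinset_card_of_nodup hMnodup] at hU
  refine ⟨y, ⟨y, b, 0, M'⟩, U \ (y ::ₘ M').toFinset,
    ⟨⟨⟨rfl, ?_, h.isLoosePath.1⟩, ?_⟩, ?_, ?_, ?_, ?_⟩, by lia⟩
  · simpa [Link.newVerts, Multiset.cons_swap y b] using hedge
  · rw [hverts, Multiset.nodup_add]
    exact ⟨hMnodup, h.isLoosePath.2,
      Multiset.disjoint_left.2 fun hu hu' => (h.mem_of_mem_path _ hu').2.2 (hM _ hu)⟩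
  · intro u hu
    rw [mem_sdiff, Multiset.mem_toFinset]
    rw [hverts, Multiset.mem_add] at hu
    obtain hu | hu := hu
    · have := h.mem_of_mem_unvisited u (hM u hu)
      tauto
    · have := h.mem_of_mem_path u hu
      tauto
  · exact fun u hu => h.mem_of_mem_unvisited u (mem_sdiff.1 hu).1
  · exact fun z hz M hM => h.not_isEdge z hz M fun u hu => (mem_sdiff.1 (hM u hu)).1
  · have := h.card_le
    rw [hverts, Multiset.card_add]
    lia

theorem not_isEdge_insert (h : IsDFSState G V₀ r b D a Z U)
    (hb : ∀ M : Multiset V, (∀ u ∈ M, u ∈ U) → ¬IsEdge G (b ::ₘ M)) :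
    ∀ z ∈ insert b Z, ∀ M : Multiset V, (∀ u ∈ M, u ∈ U) → ¬IsEdge G (z ::ₘ M) := by
  intro z hz
  obtain rfl | hz := mem_insert.1 hz
  exacts [hb, h.not_isEdge z hz]

theorem retreat (h : IsDFSState G V₀ r b (l :: D) a Z U)
    (hG : (G : Set (Finset V)).Sized (r + 2))
    (hb : ∀ M : Multiset V, (∀ u ∈ M, u ∈ U) → ¬IsEdge G (b ::ₘ M)) :
    IsDFSState G V₀ r l.target D a (insert b Z) U := by
  have hbmem := h.mem_of_mem_path b (Multiset.mem_cons_self _ _)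
  obtain ⟨⟨-, hl, hwalk⟩, hnodup⟩ := h.isLoosePath
  have hle : l.target ::ₘ newVerts D ≤ newVerts (l :: D) := by
    rw [newVerts_cons, Link.newVerts, Multiset.cons_add]
    exact Multiset.cons_le_cons _ (Multiset.le_add_left _ _)
  rw [Multiset.nodup_cons] at hnodup
  refine ⟨⟨hwalk, Multiset.nodup_of_le hle hnodup.2⟩, fun u hu => ?_, fun u hu => ?_,
    h.not_isEdge_insert hb, ?_⟩
  · have hu := Multiset.mem_of_le hle hu
    obtain ⟨hu₀, huZ, huU⟩ := h.mem_of_mem_path u (Multiset.mem_cons_of_mem hu)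
    exact ⟨hu₀, mem_insert.not.2 (not_or.2 ⟨fun hub => hnodup.1 (hub ▸ hu), huZ⟩), huU⟩
  · obtain ⟨hu₀, huZ⟩ := h.mem_of_mem_unvisited u hu
    exact ⟨hu₀, mem_insert.not.2 (not_or.2 ⟨fun hub => hbmem.2.2 (hub ▸ hu), huZ⟩)⟩
  · have hcard := h.card_le
    have hlcard := hl.card_eq hG
    rw [card_insert_of_notMem hbmem.2.1]
    simp only [newVerts_cons, Multiset.card_cons, Multiset.card_add] at hcard hlcard ⊢
    lia

theorem restart (h : IsDFSState G V₀ r b [] a Z U) (hv : v ∈ U)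
    (hb : ∀ M : Multiset V, (∀ u ∈ M, u ∈ U) → ¬IsEdge G (b ::ₘ M)) :
    IsDFSState G V₀ r v [] v (insert b Z) (U.erase v) := by
  have hbmem := h.mem_of_mem_path b (Multiset.mem_cons_self _ _)
  have hU : ∀ u ∈ U, u ∈ V₀ ∧ u ∉ insert b Z := fun u hu => by
    obtain ⟨hu₀, huZ⟩ := h.mem_of_mem_unvisited u hu
    exact ⟨hu₀, mem_insert.not.2 (not_or.2 ⟨fun hub => hbmem.2.2 (hub ▸ hu), huZ⟩)⟩
  refine ⟨.nil G v, fun u hu => ?_, fun u hu => hU u (mem_of_mem_erase hu),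
    fun z hz M hM => h.not_isEdge_insert hb z hz M fun u hu => mem_of_mem_erase (hM u hu), ?_⟩
  · obtain rfl : u = v := by simpa using hu
    exact ⟨(hU u hv).1, (hU u hv).2, notMem_erase u U⟩
  · have := h.card_le
    have := card_erase_add_one hv
    rw [card_insert_of_notMem hbmem.2.1]
    simp only [newVerts_nil, Multiset.card_cons, Multiset.card_zero] at *
    lia

theorem exists_next (h : IsDFSState G V₀ r b D a Z U) (hG : (G : Set (Finset V)).Sized (r + 2))
    (hU : U.Nonempty) :
    ∃ b' D' a' Z' U', IsDFSState G V₀ r b' D' a' Z' U' ∧ #Z' ≤ #Z + 1 ∧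
      2 * #U' + D'.length < 2 * #U + D.length := by
  by_cases hb : ∀ M : Multiset V, (∀ u ∈ M, u ∈ U) → ¬IsEdge G (b ::ₘ M)
  · cases D with
    | nil =>
      obtain ⟨v, hv⟩ := hU
      exact ⟨_, _, _, _, _, h.restart hv hb, card_insert_le _ _, by
        have := card_erase_lt_of_mem hv
        lia⟩
    | cons l D =>
      exact ⟨_, _, _, _, _, h.retreat hG hb, card_insert_le _ _, by
        rw [List.length_cons]
        lia⟩
  · push Not at hb
    obtain ⟨M, hM, hedge⟩ := hb
    obtain ⟨b', l, U', h', hU'⟩ := h.extend hG hM hedge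
    exact ⟨b', l :: D, a, Z, U', h', by lia, by rw [List.length_cons]; lia⟩

theorem exists_terminal (h : IsDFSState G V₀ r b D a Z U)
    (hG : (G : Set (Finset V)).Sized (r + 2)) (hcross : HasCrossingEdges G N (r + 2))
    (hN : 0 < N) (hZ : #Z ≤ N) :
    ∃ b' D' a' Z' U', IsDFSState G V₀ r b' D' a' Z' U' ∧ #Z' ≤ N ∧ #U' ≤ N := by
  induction hm : 2 * #U + D.length using Nat.strong_induction_on generalizing b D a Z U with
  | _ m ih =>
    by_cases hU : #U ≤ N
    · exact ⟨b, D, a, Z, U, h, hZ, hU⟩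
    have hZN : #Z < N := by
      by_contra hZN
      obtain ⟨z, hz, M, hM, hedge⟩ :=
        hcross.exists_isEdge_of_card_le (not_lt.1 hZN) (not_le.1 hU).le
      exact h.not_isEdge z hz M hM hedge
    obtain ⟨b', D', a', Z', U', h', hZ', hlt⟩ :=
      h.exists_next hG (card_pos.1 (hN.trans (not_le.1 hU)))
    exact ih _ (hm ▸ hlt) h' (by lia) rfl

end IsDFSState

theorem exists_long_isLoosePath {G : Finset (Finset V)} {V₀ : Finset V} {r N : ℕ}
    (hG : (G : Set (Finset V)).Sized (r + 2)) (hcross : HasCrossingEdges G N (r + 2))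
    (hN : 0 < N) (hV₀ : V₀.Nonempty) :
    ∃ b D a, IsLoosePath G b D a ∧ (∀ u ∈ b ::ₘ newVerts D, u ∈ V₀) ∧
      #V₀ ≤ (r + 1) * D.length + 1 + (r + 2) * N := by
  obtain ⟨v, hv⟩ := hV₀
  have hstart : IsDFSState G V₀ r v [] v ∅ (V₀.erase v) :=
    ⟨.nil G v, by simpa using hv, by simp +contextual [mem_erase], by simp, by
      rw [← card_erase_add_one hv]; simp [add_comm]⟩
  obtain ⟨b, D, a, Z, U, h, hZ, hU⟩ := hstart.exists_terminal hG hcross hN (by simp)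
  refine ⟨b, D, a, h.isLoosePath, fun u hu => (h.mem_of_mem_path u hu).1, ?_⟩
  have hcard := h.card_le
  rw [Multiset.card_cons, h.isLoosePath.1.card_newVerts hG] at hcard
  nlinarith [Nat.mul_le_mul_left (r + 1) hZ]

end LongPaths

section ClosingPaths

variable {V : Type*} [DecidableEq V] [Fintype V] {H G : Finset (Finset V)} {F : Finset V}
  {N d r : ℕ} {a c : V}

theorem exists_long_isLooseWalkThrough_compl (hG : (G : Set (Finset V)).Sized (r + 2))
    (hcross : HasCrossingEdges G N (r + 2)) (hN : 0 < N)
    (hd : ∀ S : Finset V, #S = r + 1 → d ≤ #(nbrs H S)) (hdV : d ≤ Fintype.card V)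
    (hac : a ≠ c) (ha : a ∈ F) (hc : c ∈ F) (hF : #F + 10 * ((r + 1) * N) ≤ d) :
    ∃ L : List (Link V), IsLooseWalkThrough (H ∪ G) (↑F)ᶜ c L a ∧
      Fintype.card V ≤ (r + 1) * L.length + #F + 8 * ((r + 1) * N) := by
  have hrN : r + 1 ≤ (r + 1) * N := Nat.le_mul_of_pos_right _ hN
  have hNr : N ≤ (r + 1) * N := Nat.le_mul_of_pos_left _ r.succ_pos
  obtain ⟨S, hSF, hS, hgate⟩ := exists_isGateway (c := c) hcross hd hdV hc (by lia)
  obtain ⟨S', hS'F, hS', hgate'⟩ := exists_isGateway (c := a) (F := F ∪ S) hcross hd hdV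
    (mem_union_left _ ha) (by have := card_union_le F S; lia)
  rw [disjoint_union_right] at hS'F
  obtain ⟨hS'F, hS'S⟩ := hS'F
  have hV₀card : Fintype.card V ≤ #(F ∪ S ∪ S')ᶜ + #F + 2 * (r + N) := by
    rw [card_compl]
    have := card_union_le (F ∪ S) S'
    have := card_union_le F S
    lia
  obtain ⟨b, D, e, hD, hDmem, hDcard⟩ := exists_long_isLoosePath (V₀ := (F ∪ S ∪ S')ᶜ) hG hcross
    hN (card_pos.1 (by lia))
  simp only [mem_compl, mem_union, not_or] at hDmem
  have hlen : 2 * N ≤ D.length := by nlinarith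
  obtain ⟨D', hD', hlen', hmem⟩ := hgate.exists_isLoosePath_between hgate'
    (hD.mono subset_union_right) hlen hac (disjoint_right.1 hSF ha) (disjoint_right.1 hSF hc)
    (disjoint_right.1 hS'F ha) (disjoint_right.1 hS'F hc) (disjoint_right.1 hS'S) fun u hu =>
      ⟨fun h => (hDmem u hu).1.1 (h ▸ ha), fun h => (hDmem u hu).1.1 (h ▸ hc), (hDmem u hu).1.2,
        (hDmem u hu).2⟩
  refine ⟨reversal D', hD'.isLooseWalkThrough_reversal hac fun u hu huc => ?_, ?_⟩
  · obtain hu | hu | hu | hu := hmem u hu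
    exacts [absurd hu huc, disjoint_left.1 hSF hu, disjoint_left.1 hS'F hu, (hDmem u hu).1.1]
  · rw [length_reversal]
    nlinarith [Nat.mul_le_mul_left (r + 1) hlen']

end ClosingPaths

section AbsorbingPaths

theorem exists_mul_sum_le_card_mul_sum_filter {ι κ : Type*} {S : Finset ι} {T : Finset κ}
    {R : κ → ι → Prop} {w : ι → ℝ} {m : ℕ} (hT : T.Nonempty) (hw : ∀ s ∈ S, 0 ≤ w s)
    (hm : ∀ s ∈ S, m ≤ #{v ∈ T | R v s}) :
    ∃ v ∈ T, m * ∑ s ∈ S, w s ≤ #T * ∑ s ∈ S with R v s, w s := by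
  refine exists_le_of_sum_le hT ?_
  rw [sum_const, nsmul_eq_mul, ← mul_sum]
  refine mul_le_mul_of_nonneg_left ?_ (Nat.cast_nonneg _)
  calc m * ∑ s ∈ S, w s = ∑ s ∈ S, m * w s := mul_sum ..
    _ ≤ ∑ s ∈ S, ∑ v ∈ T with R v s, w s := sum_le_sum fun s hs => by
        rw [sum_const, nsmul_eq_mul]
        exact mul_le_mul_of_nonneg_right (mod_cast hm s hs) (hw s hs)
    _ = ∑ v ∈ T, ∑ s ∈ S with R v s, w s := by
        simp only [sum_filter]
        exact sum_comm

variable {V : Type*}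

/-- The vertex `s` can be inserted after the source of the link `l`: replacing the target of `l`
by `s` yields an edge of `H`. -/
def Link.Insertable (H : Finset (Finset V)) (s : V) (l : Link V) : Prop :=
  l.slot = 0 ∧ IsEdge H (l.source ::ₘ s ::ₘ l.body)

/-- The vertex `s` can take the place of the vertex in the slot of the link `l`. -/
def Link.Swappable (H : Finset (Finset V)) (s : V) (l : Link V) : Prop :=
  Multiset.card l.slot = 1 ∧ IsEdge H (l.source ::ₘ l.target ::ₘ s ::ₘ l.body)

variable [DecidableEq V] [Fintype V]

/-- Whatever small set `F` has to be avoided, some edge of `H` outside `F`, viewed as a link, is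
good for so many of the remaining vertices that halving their weights decreases the total weight
by a factor `ρ`. -/
def IsReducing (H : Finset (Finset V)) (good : V → Link V → Prop) (ρ : ℝ) (d : ℕ) : Prop :=
  ∀ (F : Finset V) (w : V → ℝ), 4 * #F ≤ d → (∀ s, 0 ≤ w s) →
    ∃ l : Link V, IsEdge H (l.source ::ₘ l.newVerts) ∧ (∀ u ∈ l.source ::ₘ l.newVerts, u ∉ F) ∧
      ∑ s ∈ (F ∪ (l.source ::ₘ l.newVerts).toFinset)ᶜ, (if good s l then 1 / 2 else 1) * w s ≤
        ρ * ∑ s ∈ Fᶜ, w s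

variable {H G : Finset (Finset V)} {F A : Finset V} {N d r m : ℕ} {b : V} {w : V → ℝ} {ρ : ℝ}
  {good : V → Link V → Prop}

theorem exists_popular_vertex (hd : ∀ S : Finset V, #S = r + 1 → d ≤ #(nbrs H S))
    (hA : #A = r) (hF : 2 * #F ≤ d) (hFA : #(F ∪ A) < Fintype.card V) (hw : ∀ s, 0 ≤ w s) :
    ∃ v ∈ (F ∪ A)ᶜ, d / (2 * Fintype.card V) * ∑ s ∈ (F ∪ A)ᶜ, w s ≤
      ∑ s ∈ (F ∪ A)ᶜ with IsEdge H (v ::ₘ s ::ₘ A.val), w s := by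
  have hmem : ∀ u ∈ (F ∪ A)ᶜ, u ∉ F ∧ u ∉ A := fun u hu => by simpa using hu
  have hdeg : ∀ s ∈ (F ∪ A)ᶜ, d - #F ≤ #{v ∈ (F ∪ A)ᶜ | IsEdge H (v ::ₘ s ::ₘ A.val)} := by
    intro s hs
    have hsA := (hmem s hs).2
    obtain ⟨X, hXnbrs, hX, hXF⟩ :=
      exists_subset_nbrs_insert (F := F) (N := d - #F) hd hA hsA (by lia)
    rw [← hX]
    refine card_le_card fun v hv => mem_filter.2 ?_
    have hedge := isEdge_of_mem_nbrs_insert hsA (hXnbrs hv)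
    have hvA := (Multiset.nodup_cons.1 (Multiset.nodup_cons.1 hedge.nodup).2).1
    rw [mem_compl, mem_union, not_or, Multiset.cons_swap]
    exact ⟨⟨disjoint_left.1 hXF hv, hvA⟩, hedge⟩
  obtain ⟨v, hv, h⟩ := exists_mul_sum_le_card_mul_sum_filter
    (card_pos.1 (by rw [card_compl]; lia)) (fun s _ => hw s) hdeg
  have hV : (0 : ℝ) < Fintype.card V := mod_cast (by lia : 0 < Fintype.card V)
  refine ⟨v, hv, ?_⟩
  rw [div_mul_eq_mul_div, div_le_iff₀ (by positivity)]
  have hd2 : (d : ℝ) ≤ 2 * (d - #F : ℕ) := mod_cast (by lia : d ≤ 2 * (d - #F))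
  have hcard : (#(F ∪ A)ᶜ : ℝ) ≤ Fintype.card V := mod_cast card_le_univ _
  have hsum : 0 ≤ ∑ s ∈ (F ∪ A)ᶜ, w s := sum_nonneg fun s _ => hw s
  have hsum' : 0 ≤ ∑ s ∈ (F ∪ A)ᶜ with IsEdge H (v ::ₘ s ::ₘ A.val), w s :=
    sum_nonneg fun s _ => hw s
  nlinarith [mul_le_mul_of_nonneg_right hd2 hsum, mul_le_mul_of_nonneg_right hcard hsum']

theorem exists_reducing_edge (hd : ∀ S : Finset V, #S = r + 1 → d ≤ #(nbrs H S))
    (hF : 2 * #F ≤ d) (hFr : #F + r < d) (hdV : d ≤ Fintype.card V) (hw : ∀ s, 0 ≤ w s) :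
    ∃ (A : Finset V) (v y : V), #A = r ∧ IsEdge H (v ::ₘ y ::ₘ A.val) ∧
      (∀ u ∈ v ::ₘ y ::ₘ A.val, u ∉ F) ∧
      ∑ s ∈ (F ∪ (v ::ₘ y ::ₘ A.val).toFinset)ᶜ,
          (if IsEdge H (v ::ₘ s ::ₘ A.val) then 1 / 2 else 1) * w s ≤
        (1 - d / (4 * Fintype.card V)) * ∑ s ∈ Fᶜ, w s := by
  obtain ⟨A, hA, hAF⟩ := exists_card_eq_disjoint (F := F) (r := r) (by lia)
  obtain ⟨v, hv, hsum⟩ := exists_popular_vertex (F := F) hd hA hF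
    (by have := card_union_le F A; lia) hw
  rw [mem_compl, mem_union, not_or] at hv
  obtain ⟨Y, hYnbrs, hY, hYF⟩ :=
    exists_subset_nbrs_insert (F := F) (N := 1) hd hA hv.2 (by lia)
  obtain ⟨y, hy⟩ := card_pos.1 (hY ▸ Nat.one_pos)
  refine ⟨A, v, y, hA, isEdge_of_mem_nbrs_insert hv.2 (hYnbrs hy), ?_, ?_⟩
  · simp only [Multiset.mem_cons, mem_val]
    rintro u (rfl | rfl | hu)
    exacts [hv.1, disjoint_left.1 hYF hy, disjoint_left.1 hAF hu]
  have hfactor : (d : ℝ) / (4 * Fintype.card V) = d / (2 * Fintype.card V) / 2 := by ring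
  have hnonneg : 0 ≤ 1 - (d : ℝ) / (4 * Fintype.card V) := by
    have hd' : (d : ℝ) ≤ Fintype.card V := mod_cast hdV
    exact sub_nonneg.2 (div_le_one_of_le₀ (by linarith) (by linarith))
  calc _ ≤ ∑ s ∈ (F ∪ A)ᶜ, (if IsEdge H (v ::ₘ s ::ₘ A.val) then 1 / 2 else 1) * w s := by
        refine sum_le_sum_of_subset_of_nonneg (compl_subset_compl.2 ?_) fun s _ _ =>
          mul_nonneg (by split_ifs <;> norm_num) (hw s)
        exact union_subset_union_right fun u hu => by simp [hu]
    _ = ∑ s ∈ (F ∪ A)ᶜ, w s -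
          1 / 2 * ∑ s ∈ (F ∪ A)ᶜ with IsEdge H (v ::ₘ s ::ₘ A.val), w s := by
        rw [sum_filter, mul_sum, ← sum_sub_distrib]
        exact sum_congr rfl fun s _ => by split_ifs <;> ring
    _ ≤ (1 - d / (4 * Fintype.card V)) * ∑ s ∈ (F ∪ A)ᶜ, w s := by rw [hfactor]; linarith
    _ ≤ _ := mul_le_mul_of_nonneg_left (sum_le_sum_of_subset_of_nonneg
        (compl_subset_compl.2 subset_union_left) fun s _ _ => hw s) hnonneg

theorem isReducing_insertable (hd : ∀ S : Finset V, #S = r + 1 → d ≤ #(nbrs H S))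
    (hdV : d ≤ Fintype.card V) (hr : 2 * r < d) :
    IsReducing H (fun s l => l.Insertable H s) (1 - d / (4 * Fintype.card V)) d := by
  intro F w hF hw
  obtain ⟨A, v, y, -, hedge, hAF, hsum⟩ :=
    exists_reducing_edge (F := F) hd (by lia) (by lia) hdV hw
  refine ⟨⟨v, y, 0, A.val⟩, ?_⟩
  simpa [Link.newVerts, Link.Insertable] using ⟨hedge, by simpa using hAF, by simpa using hsum⟩

theorem isReducing_swappable (hd : ∀ S : Finset V, #S = r + 1 → d ≤ #(nbrs H S))
    (hdV : d ≤ Fintype.card V) (hr : 2 * r < d) (hr₀ : 0 < r) :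
    IsReducing H (fun s l => l.Swappable H s) (1 - d / (4 * Fintype.card V)) d := by
  intro F w hF hw
  obtain ⟨A, v, y, hA, hedge, hAF, hsum⟩ :=
    exists_reducing_edge (F := F) hd (by lia) (by lia) hdV hw
  obtain ⟨a, ha⟩ := card_pos.1 (hA ▸ hr₀)
  have hA : A.val = a ::ₘ (A.erase a).val := by
    rw [← insert_val_of_notMem (notMem_erase a A), insert_erase ha]
  have hverts : ∀ u, a ::ₘ v ::ₘ u ::ₘ (A.erase a).val = v ::ₘ u ::ₘ A.val := fun u => by
    rw [hA, Multiset.cons_swap a v, Multiset.cons_swap a u]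
  refine ⟨⟨a, v, {y}, (A.erase a).val⟩, ?_⟩
  simp only [Link.newVerts, Link.Swappable, Multiset.singleton_add, hverts,
    Multiset.card_singleton, true_and]
  exact ⟨hedge, hAF, hsum⟩

theorem exists_append_link (hG : HasCrossingEdges G N (r + 2))
    (hH : (H : Set (Finset V)).Sized (r + 2))
    (hd : ∀ S : Finset V, #S = r + 1 → d ≤ #(nbrs H S)) (hdV : d ≤ Fintype.card V)
    (hF : #F + (r + 2) + 2 * (r + N) ≤ d) (hb : b ∈ F) {l : Link V}
    (hl : IsEdge H (l.source ::ₘ l.newVerts)) (hlF : ∀ u ∈ l.source ::ₘ l.newVerts, u ∉ F) :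
    ∃ L : List (Link V), L.length = 3 ∧ IsLooseWalk (H ∪ G) b (L ++ [l]) l.target ∧
      (newVerts (L ++ [l])).Nodup ∧ (∀ u ∈ newVerts (L ++ [l]), u ∉ F) ∧
      ∀ u ∈ l.source ::ₘ l.newVerts, u ∈ newVerts (L ++ [l]) := by
  set K := l.source ::ₘ l.newVerts with hK
  obtain ⟨L, hL, hwalk, M, hLM, hM, hMF⟩ :=
    exists_isLooseWalkThrough_compl (b := b) (v := l.source) (F := F ∪ K.toFinset) hG hd hdV
      (mem_union_left _ hb) (by simp [hK]) (by
        have := card_union_le F K.toFinset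
        have := Multiset.toFinset_card_le K
        rw [hl.card_eq hH] at this
        lia)
  simp only [coe_union, Set.mem_compl_iff, Set.mem_union, mem_coe, Multiset.mem_toFinset,
    not_or] at hMF
  have hnew : newVerts (L ++ [l]) = M + K := by
    rw [newVerts_append, hLM, newVerts_cons, newVerts_nil, add_zero, hK, Multiset.cons_add,
      Multiset.add_cons]
  refine ⟨L, hL, isLooseWalk_append.2 ⟨l.source, hwalk, rfl, hl.mono subset_union_left, rfl⟩,
    ?_, ?_, ?_⟩
  · rw [hnew, Multiset.nodup_add]
    exact ⟨hM, hl.nodup, Multiset.disjoint_left.2 fun hu => (hMF _ hu).2⟩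
  · rw [hnew]
    exact fun u hu => (Multiset.mem_add.1 hu).elim (fun hu => (hMF u hu).1) (hlF u)
  · rw [hnew]
    exact fun u hu => Multiset.mem_add.2 (.inr hu)

theorem half_pow_countP_append_singleton_le {ι : Type*} (p : ι → Bool) (L : List ι) (l : ι) :
    (1 / 2 : ℝ) ^ (L ++ [l]).countP p ≤ if p l then 1 / 2 else 1 := by
  have hcount : (if p l then 1 else 0) ≤ (L ++ [l]).countP p := by
    simp only [List.countP_append, List.countP_singleton]
    lia
  calc (1 / 2 : ℝ) ^ (L ++ [l]).countP p ≤ (1 / 2) ^ (if p l then 1 else 0) :=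
        pow_le_pow_of_le_one (by norm_num) (by norm_num) hcount
    _ = if p l then 1 / 2 else 1 := by split_ifs <;> simp

theorem IsReducing.exists_append (hred : IsReducing H good ρ d) (hG : HasCrossingEdges G N (r + 2))
    (hH : (H : Set (Finset V)).Sized (r + 2))
    (hd : ∀ S : Finset V, #S = r + 1 → d ≤ #(nbrs H S)) (hdV : d ≤ Fintype.card V)
    (hN : 8 * ((r + 1) * N) ≤ d) (hN₀ : 0 < N) (hF : 4 * #F ≤ d) (hb : b ∈ F) (hw : ∀ s, 0 ≤ w s) :
    ∃ L a, IsLooseWalk (H ∪ G) b L a ∧ (newVerts L).Nodup ∧ (∀ u ∈ newVerts L, u ∉ F) ∧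
      L.length = 4 ∧
      ∑ s ∈ (F ∪ (newVerts L).toFinset)ᶜ, (1 / 2 : ℝ) ^ L.countP (fun l => good s l) * w s ≤
        ρ * ∑ s ∈ Fᶜ, w s := by
  obtain ⟨l, hl, hlF, hlsum⟩ := hred F w hF hw
  obtain ⟨L, hL, hwalk, hnodup, hLF, hlL⟩ := exists_append_link hG hH hd hdV
    (by nlinarith [Nat.le_mul_of_pos_right (r + 1) hN₀]) hb hl hlF
  refine ⟨L ++ [l], l.target, hwalk, hnodup, hLF, by simp [hL], le_trans ?_ hlsum⟩
  calc ∑ s ∈ (F ∪ (newVerts (L ++ [l])).toFinset)ᶜ,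
        (1 / 2 : ℝ) ^ (L ++ [l]).countP (fun l => good s l) * w s
      ≤ ∑ s ∈ (F ∪ (l.source ::ₘ l.newVerts).toFinset)ᶜ,
          (1 / 2 : ℝ) ^ (L ++ [l]).countP (fun l => good s l) * w s := by
        refine sum_le_sum_of_subset_of_nonneg ?_ fun s _ _ => mul_nonneg (by positivity) (hw s)
        exact compl_subset_compl.2 (union_subset_union_right fun u hu =>
          Multiset.mem_toFinset.2 (hlL u (Multiset.mem_toFinset.1 hu)))
    _ ≤ ∑ s ∈ (F ∪ (l.source ::ₘ l.newVerts).toFinset)ᶜ, (if good s l then 1 / 2 else 1) * w s := by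
        refine sum_le_sum fun s _ => mul_le_mul_of_nonneg_right ?_ (hw s)
        simpa using half_pow_countP_append_singleton_le (fun l => decide (good s l)) L l

theorem exists_isLoosePath_sum_half_pow_le (hG : HasCrossingEdges G N (r + 2))
    (hGsized : (G : Set (Finset V)).Sized (r + 2)) (hH : (H : Set (Finset V)).Sized (r + 2))
    (hd : ∀ S : Finset V, #S = r + 1 → d ≤ #(nbrs H S)) (hdV : d ≤ Fintype.card V)
    (hN : 8 * ((r + 1) * N) ≤ d) (hN₀ : 0 < N) (hρ : 0 ≤ ρ) (hred : IsReducing H good ρ d)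
    (hb : b ∈ F) (m : ℕ) (hm : 4 * (#F + 4 * (r + 1) * m) ≤ d) :
    ∃ D a, IsLooseWalk (H ∪ G) b D a ∧ (newVerts D).Nodup ∧ (∀ u ∈ newVerts D, u ∉ F) ∧
      D.length = 4 * m ∧
      ∑ s ∈ (F ∪ (newVerts D).toFinset)ᶜ, (1 / 2 : ℝ) ^ D.countP (fun l => good s l) ≤
        Fintype.card V * ρ ^ m := by
  induction m with
  | zero =>
    refine ⟨[], b, rfl, by simp, by simp, rfl, ?_⟩
    simpa only [newVerts_nil, List.countP_nil, pow_zero, sum_const, nsmul_eq_mul, mul_one,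
      Multiset.toFinset_zero, union_empty, Nat.cast_le] using card_le_univ Fᶜ
  | succ m ih =>
    obtain ⟨D, a, hD, hDnodup, hDF, hDlen, hDsum⟩ := ih (by lia)
    set F' := F ∪ (newVerts D).toFinset with hF'
    have hF'card : 4 * #F' ≤ d := by
      have := card_union_le F (newVerts D).toFinset
      have := Multiset.toFinset_card_le (newVerts D)
      rw [hD.card_newVerts (r := r) (by
        rw [coe_union]; exact Set.sized_union.2 ⟨hH, hGsized⟩), hDlen] at this
      lia
    have haF : a ∈ F' := by
      obtain rfl | ha := Multiset.mem_cons.1 hD.end_mem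
      exacts [mem_union_left _ hb, mem_union_right _ (Multiset.mem_toFinset.2 ha)]
    obtain ⟨L, c, hL, hLnodup, hLF, hLlen, hLsum⟩ := hred.exists_append hG hH hd hdV hN hN₀ hF'card
      haF (w := fun s => (1 / 2) ^ D.countP (fun l => good s l)) fun s => by positivity
    simp only [hF', mem_union, Multiset.mem_toFinset, not_or] at hLF
    refine ⟨D ++ L, c, isLooseWalk_append.2 ⟨a, hD, hL⟩, ?_, ?_, ?_, ?_⟩
    · rw [newVerts_append, Multiset.nodup_add]
      exact ⟨hDnodup, hLnodup, Multiset.disjoint_right.2 fun hu => (hLF _ hu).2⟩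
    · rw [newVerts_append]
      exact fun u hu => (Multiset.mem_add.1 hu).elim (hDF u) fun hu => (hLF u hu).1
    · rw [List.length_append, hDlen, hLlen, mul_add_one]
    · rw [newVerts_append, Multiset.toFinset_add, ← union_assoc]
      simp only [List.countP_append, add_comm (D.countP _), pow_add (1 / 2 : ℝ)]
      calc _ ≤ ρ * ∑ s ∈ F'ᶜ, (1 / 2 : ℝ) ^ D.countP (fun l => good s l) := hLsum
        _ ≤ ρ * (Fintype.card V * ρ ^ m) := mul_le_mul_of_nonneg_left hDsum hρ
        _ = Fintype.card V * ρ ^ (m + 1) := by ring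

theorem exists_isLoosePath_le_countP {M : ℕ} (hG : HasCrossingEdges G N (r + 2))
    (hGsized : (G : Set (Finset V)).Sized (r + 2)) (hH : (H : Set (Finset V)).Sized (r + 2))
    (hd : ∀ S : Finset V, #S = r + 1 → d ≤ #(nbrs H S)) (hdV : d ≤ Fintype.card V)
    (hN : 8 * ((r + 1) * N) ≤ d) (hN₀ : 0 < N) (hρ : 0 ≤ ρ) (hred : IsReducing H good ρ d)
    (hb : b ∈ F) (hm : 4 * (#F + 4 * (r + 1) * m) ≤ d)
    (hM : Fintype.card V * ρ ^ m < (1 / 2) ^ M) :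
    ∃ D a, IsLooseWalk (H ∪ G) b D a ∧ (newVerts D).Nodup ∧ (∀ u ∈ newVerts D, u ∉ F) ∧
      D.length = 4 * m ∧
      ∀ s, s ∉ F → s ∉ newVerts D → M ≤ D.countP (fun l => good s l) := by
  obtain ⟨D, a, hD, hnodup, hDF, hlen, hsum⟩ :=
    exists_isLoosePath_sum_half_pow_le hG hGsized hH hd hdV hN hN₀ hρ hred hb m hm
  refine ⟨D, a, hD, hnodup, hDF, hlen, fun s hsF hsD => ?_⟩
  have hs : s ∈ (F ∪ (newVerts D).toFinset)ᶜ := by simp [hsF, hsD]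
  have hlt : (1 / 2 : ℝ) ^ D.countP (fun l => good s l) < (1 / 2) ^ M :=
    (single_le_sum (f := fun s => (1 / 2 : ℝ) ^ D.countP (fun l => good s l))
      (fun s _ => by positivity) hs).trans_lt (hsum.trans_lt hM)
  exact ((pow_lt_pow_iff_right_of_lt_one₀ (by norm_num) (by norm_num)).1 hlt).le

theorem exists_absorbing_isLoosePath {M : ℕ} (hG : HasCrossingEdges G N (r + 2))
    (hGsized : (G : Set (Finset V)).Sized (r + 2)) (hH : (H : Set (Finset V)).Sized (r + 2))
    (hd : ∀ S : Finset V, #S = r + 1 → d ≤ #(nbrs H S)) (hdV : d ≤ Fintype.card V)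
    (hN : 8 * ((r + 1) * N) ≤ d) (hN₀ : 0 < N) (hm₀ : 0 < m) (hm : 4 * (1 + 8 * (r + 1) * m) ≤ d)
    (hM : Fintype.card V * (1 - d / (4 * Fintype.card V) : ℝ) ^ m < (1 / 2) ^ M) :
    ∃ a D c, IsLoosePath (H ∪ G) a D c ∧ a ≠ c ∧ D.length ≤ 8 * m ∧
      ∀ s ∉ a ::ₘ newVerts D, M ≤ D.countP (fun l => l.Insertable H s) ∧
        (0 < r → M ≤ D.countP (fun l => l.Swappable H s)) := by
  have hr : 2 * r < d := by nlinarith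
  have hρ : 0 ≤ 1 - (d : ℝ) / (4 * Fintype.card V) := by
    have hd' : (d : ℝ) ≤ Fintype.card V := mod_cast hdV
    exact sub_nonneg.2 (div_le_one_of_le₀ (by linarith) (by linarith))
  obtain ⟨a⟩ : Nonempty V := Fintype.card_pos_iff.1 (by lia)
  obtain ⟨D, b, hD, hnodup, hDa, hlen, hins⟩ := exists_isLoosePath_le_countP (b := a) (F := {a})
    hG hGsized hH hd hdV hN hN₀ hρ (isReducing_insertable hd hdV hr) (mem_singleton_self a)
    (by rw [card_singleton]; lia) hM
  have hpath : IsLoosePath (H ∪ G) a D b :=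
    ⟨hD, Multiset.nodup_cons.2 ⟨fun h => hDa a h (mem_singleton_self a), hnodup⟩⟩
  have hne : ∀ {D' c}, IsLoosePath (H ∪ G) a (D ++ D') c → a ≠ c := by
    rintro D' _ hpath' rfl
    refine (Multiset.nodup_cons.1 hpath'.2).1 (hpath'.1.end_mem_newVerts fun hnil => ?_)
    rw [(List.append_eq_nil_iff.1 hnil).1, List.length_nil] at hlen
    lia
  obtain rfl | hr₀ := r.eq_zero_or_pos
  · refine ⟨a, D, b, hpath, hne (D' := []) (by rwa [List.append_nil]), by lia, fun s hs => ?_⟩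
    rw [Multiset.mem_cons, not_or] at hs
    exact ⟨hins s (by simpa using hs.1) hs.2, fun h => absurd h (lt_irrefl 0)⟩
  have hsized : ((H ∪ G : Finset _) : Set (Finset V)).Sized (r + 2) := by
    rw [coe_union]
    exact Set.sized_union.2 ⟨hH, hGsized⟩
  obtain ⟨D', c, hD', hnodup', hdisj, hlen', hswap⟩ := exists_isLoosePath_le_countP
    (F := (a ::ₘ newVerts D).toFinset) (m := m)
    hG hGsized hH hd hdV hN hN₀ hρ (isReducing_swappable hd hdV hr hr₀)
    (Multiset.mem_toFinset.2 hD.end_mem) (by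
      have := Multiset.toFinset_card_le (a ::ₘ newVerts D)
      rw [Multiset.card_cons, hD.card_newVerts hsized, hlen] at this
      lia) hM
  simp only [Multiset.mem_toFinset] at hdisj hswap
  have hpath' := hpath.append hD' hnodup' hdisj
  refine ⟨a, D ++ D', c, hpath', hne hpath', by rw [List.length_append]; lia, fun s hs => ?_⟩
  rw [newVerts_append, ← Multiset.cons_add, Multiset.mem_add, not_or] at hs
  have hsa : s ∉ ({a} : Finset V) ∧ s ∉ newVerts D := by simpa using hs.1
  rw [List.countP_append, List.countP_append]
  exact ⟨(hins s hsa.1 hsa.2).trans (Nat.le_add_right _ _),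
    fun _ => (hswap s hs.1 hs.2).trans (Nat.le_add_left _ _)⟩

end AbsorbingPaths

section Absorption

variable {V : Type*}

/-- The number of links of a walk, counted with both of their orientations, after whose source
the vertex `s` can be inserted. -/
noncomputable def insertCount (H : Finset (Finset V)) (s : V) (D : List (Link V)) : ℕ :=
  D.countP (fun l => l.Insertable H s) + (reversal D).countP (fun l => l.Insertable H s)

/-- The number of links of a walk whose slot can be taken by the vertex `s`. -/
noncomputable def swapCount (H : Finset (Finset V)) (s : V) (D : List (Link V)) : ℕ :=
  D.countP (fun l => l.Swappable H s)

/-- The walk obtained from `L₁ ++ l₀ :: (L₂ ++ l₁ :: L₃)` by inserting `w` after the sources of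
`l₀` and `l₁`, running through `L₂` backwards in between, and joining the targets of `l₀` and `l₁`
by a new link with inner vertices `C`. -/
def reroute (w : V) (C : Multiset V) (L₁ : List (Link V)) (l₀ : Link V) (L₂ : List (Link V))
    (l₁ : Link V) (L₃ : List (Link V)) : List (Link V) :=
  L₁ ++ ⟨l₀.source, w, 0, l₀.body⟩ :: ⟨w, l₁.source, 0, l₁.body⟩ ::
    (reversal L₂ ++ ⟨l₀.target, l₁.target, 0, C⟩ :: L₃)

variable {H G E : Finset (Finset V)} {D L₁ L₂ L₃ : List (Link V)} {l l₀ l₁ : Link V}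
  {a b s w y v : V} {C U : Multiset V} {N r t : ℕ}

theorem Link.Swappable.reverse_iff : l.reverse.Swappable H s ↔ l.Swappable H s := by
  rw [Link.Swappable, Link.Swappable, Multiset.cons_swap]
  rfl

theorem Link.Insertable.not_swappable {w s : V} (h : l.Insertable H w) : ¬ l.Swappable H s := by
  simp [Link.Swappable, h.1]

theorem insertCount_append :
    insertCount H s (L₁ ++ L₂) = insertCount H s L₁ + insertCount H s L₂ := by
  simp only [insertCount, reversal_append, List.countP_append]
  lia

theorem insertCount_cons_le : insertCount H s (l :: D) ≤ insertCount H s D + 2 := by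
  simp only [insertCount, reversal_cons, List.countP_append, List.countP_cons, List.countP_nil]
  split_ifs <;> lia

theorem insertCount_le_cons : insertCount H s D ≤ insertCount H s (l :: D) := by
  simp only [insertCount, reversal_cons, List.countP_append, List.countP_cons, List.countP_nil]
  lia

theorem insertCount_reversal : insertCount H s (reversal D) = insertCount H s D := by
  rw [insertCount, reversal_reversal, add_comm, insertCount]

theorem swapCount_reversal : swapCount H s (reversal D) = swapCount H s D := by
  simp only [swapCount, reversal, List.countP_reverse, List.countP_map, Function.comp_def,
    Link.Swappable.reverse_iff]

theorem IsLooseWalk.exists_swap (hHE : H ⊆ E) (h : IsLooseWalk E a D b) (hl : l ∈ D)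
    (hslot : l.slot = {y}) (hedge : IsEdge H (l.source ::ₘ l.target ::ₘ v ::ₘ l.body)) :
    ∃ D', IsLooseWalk E a D' b ∧ y ::ₘ newVerts D' = v ::ₘ newVerts D ∧
      (∀ s, insertCount H s D' = insertCount H s D) ∧ (∀ s, swapCount H s D' = swapCount H s D) ∧
      ∀ l' ∈ D, l'.slot ≠ {y} → l' ∈ D' := by
  obtain ⟨P, Q, rfl⟩ := List.append_of_mem hl
  refine ⟨P ++ ⟨l.source, l.target, {v}, l.body⟩ :: Q, ?_, ?_, fun s => ?_, fun s => ?_, ?_⟩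
  · obtain ⟨c, hP, rfl, -, hQ⟩ := isLooseWalk_append.1 h
    exact isLooseWalk_append.2 ⟨_, hP, rfl, hedge.mono hHE, hQ⟩
  · simp only [newVerts_append, newVerts_cons, Link.newVerts, hslot, ← Multiset.singleton_add]
    abel
  · simp [insertCount, reversal_append, reversal_cons, List.countP_append,
      Link.Insertable, Link.reverse, hslot]
  · simp [swapCount, List.countP_append, List.countP_cons, Link.Swappable, hslot]
  · intro l' hl' hne
    simp only [List.mem_append, List.mem_cons] at hl' ⊢
    obtain hl' | rfl | hl' := hl'
    exacts [.inl hl', absurd hslot hne, .inr (.inr hl')]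

theorem IsLooseWalk.exists_swap_of_injOn {ι : Type*} {v c : ι → V} (hHE : H ⊆ E) (J : Finset ι)
    (h : IsLooseWalk E a D b) (hc : Set.InjOn c J)
    (hl : ∀ j ∈ J, ∃ l ∈ D, l.slot = {c j} ∧
      IsEdge H (l.source ::ₘ l.target ::ₘ v j ::ₘ l.body)) :
    ∃ D', IsLooseWalk E a D' b ∧ J.val.map c + newVerts D' = J.val.map v + newVerts D ∧
      (∀ s, insertCount H s D' = insertCount H s D) ∧
      (∀ s, swapCount H s D' = swapCount H s D) ∧ ∀ l ∈ D, l.slot = 0 → l ∈ D' := by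
  induction J using Finset.induction_on generalizing D with
  | empty => exact ⟨D, h, rfl, fun _ => rfl, fun _ => rfl, fun _ hl _ => hl⟩
  | insert i J hi ih =>
    obtain ⟨l, hlD, hslot, hedge⟩ := hl i (mem_insert_self i J)
    obtain ⟨D₁, hD₁, hnew₁, hins₁, hswap₁, hmem⟩ := h.exists_swap hHE hlD hslot hedge
    obtain ⟨D₂, hD₂, hnew₂, hins₂, hswap₂, hmem₂⟩ :=
      ih hD₁ (hc.mono (coe_subset.2 (subset_insert i J))) fun j hj => by
        obtain ⟨l', hl'D, hslot', hedge'⟩ := hl j (mem_insert_of_mem hj)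
        refine ⟨l', hmem l' hl'D fun heq => ?_, hslot', hedge'⟩
        have hji := hc (by simp [hj]) (by simp) (Multiset.singleton_inj.1 (hslot'.symm.trans heq))
        exact hi (hji ▸ hj)
    refine ⟨D₂, hD₂, ?_, fun s => (hins₂ s).trans (hins₁ s),
      fun s => (hswap₂ s).trans (hswap₁ s),
      fun l hl h0 => hmem₂ l (hmem l hl (by simp [h0])) h0⟩
    rw [insert_val_of_notMem hi, Multiset.map_cons, Multiset.map_cons, Multiset.cons_add, hnew₂,
      ← Multiset.add_cons, hnew₁, Multiset.add_cons, Multiset.cons_add]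

theorem IsLooseWalk.isLooseWalk_reroute (hHE : H ⊆ E)
    (h : IsLooseWalk E a (L₁ ++ l₀ :: (L₂ ++ l₁ :: L₃)) b) (hl₀ : l₀.Insertable H w)
    (hl₁ : l₁.Insertable H w) (hC : IsEdge E (l₀.target ::ₘ l₁.target ::ₘ C)) :
    IsLooseWalk E a (reroute w C L₁ l₀ L₂ l₁ L₃) b := by
  obtain ⟨_, h₁, rfl, -, h⟩ := isLooseWalk_append.1 h
  obtain ⟨_, h₂, rfl, -, h₃⟩ := isLooseWalk_append.1 h
  refine isLooseWalk_append.2 ⟨_, h₁, rfl, ?_, rfl, ?_, isLooseWalk_append.2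
    ⟨_, h₂.reverse, rfl, ?_, h₃⟩⟩
  · simpa [Link.newVerts] using hl₀.2.mono hHE
  · simpa [Link.newVerts, Multiset.cons_swap w] using hl₁.2.mono hHE
  · simpa [Link.newVerts] using hC

theorem IsLooseWalk.newVerts_reroute (h : IsLooseWalk E a (L₁ ++ l₀ :: (L₂ ++ l₁ :: L₃)) b)
    (hl₀ : l₀.Insertable H w) (hl₁ : l₁.Insertable H w) :
    newVerts (reroute w C L₁ l₀ L₂ l₁ L₃) =
      w ::ₘ (C + newVerts (L₁ ++ l₀ :: (L₂ ++ l₁ :: L₃))) := by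
  obtain ⟨_, -, rfl, -, h⟩ := isLooseWalk_append.1 h
  obtain ⟨_, h₂, rfl, -, -⟩ := isLooseWalk_append.1 h
  have hrev := h₂.cons_newVerts_eq
  simp only [reroute, newVerts_append, newVerts_cons, Link.newVerts, hl₀.1, hl₁.1,
    ← Multiset.singleton_add] at hrev ⊢
  calc _ = {l₁.source} + newVerts (reversal L₂) +
        ({w} + newVerts L₁ + l₀.body + l₁.body + {l₁.target} + C + newVerts L₃) := by abel
    _ = _ := by rw [← hrev]; abel

theorem insertCount_le_insertCount_reroute :
    insertCount H s (L₁ ++ l₀ :: (L₂ ++ l₁ :: L₃)) ≤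
      insertCount H s (reroute w C L₁ l₀ L₂ l₁ L₃) + 4 := by
  calc _ ≤ insertCount H s L₁ + (insertCount H s L₂ + insertCount H s L₃) + 4 := by
        have h₀ := insertCount_cons_le (H := H) (s := s) (l := l₀) (D := L₂ ++ l₁ :: L₃)
        have h₁ := insertCount_cons_le (H := H) (s := s) (l := l₁) (D := L₃)
        rw [insertCount_append] at h₀ ⊢
        lia
    _ ≤ _ := by
        rw [reroute, insertCount_append, ← insertCount_reversal (D := L₂)]
        gcongr
        refine le_trans ?_ (insertCount_le_cons.trans insertCount_le_cons)
        rw [insertCount_append]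
        gcongr
        exact insertCount_le_cons

theorem swapCount_reroute (hl₀ : l₀.Insertable H w) (hl₁ : l₁.Insertable H w) :
    swapCount H s (reroute w C L₁ l₀ L₂ l₁ L₃) = swapCount H s (L₁ ++ l₀ :: (L₂ ++ l₁ :: L₃)) := by
  have hrev := swapCount_reversal (H := H) (s := s) (D := L₂)
  have hnot : ∀ {x y B}, ¬ (⟨x, y, 0, B⟩ : Link V).Swappable H s := by simp [Link.Swappable]
  simp only [swapCount, reroute, List.countP_append, List.countP_cons, hnot,
    hl₀.not_swappable, hl₁.not_swappable] at hrev ⊢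
  lia

theorem IsLooseWalk.exists_insert (hHE : H ⊆ E) (h : IsLooseWalk E a D b) (hl₀ : l₀ ∈ D)
    (hl₁ : l₁ ∈ D) (hne : l₀ ≠ l₁) (hins₀ : l₀.Insertable H w) (hins₁ : l₁.Insertable H w)
    (hC : IsEdge E (l₀.target ::ₘ l₁.target ::ₘ C)) :
    ∃ D', IsLooseWalk E a D' b ∧ newVerts D' = w ::ₘ (C + newVerts D) ∧
      (∀ s, insertCount H s D ≤ insertCount H s D' + 4) ∧
      ∀ s, swapCount H s D' = swapCount H s D := by
  wlog hD : ∃ L₁ L₂ L₃, D = L₁ ++ l₀ :: (L₂ ++ l₁ :: L₃) generalizing l₀ l₁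
  · refine this hl₁ hl₀ hne.symm hins₁ hins₀ (by rwa [Multiset.cons_swap]) ?_
    obtain ⟨P, Q, rfl⟩ := List.append_of_mem hl₀
    obtain hP | hQ : l₁ ∈ P ∨ l₁ ∈ Q := by simpa [hne.symm] using hl₁
    · obtain ⟨P₁, P₂, rfl⟩ := List.append_of_mem hP
      exact ⟨P₁, P₂, Q, by simp⟩
    · obtain ⟨Q₁, Q₂, rfl⟩ := List.append_of_mem hQ
      exact absurd ⟨P, Q₁, Q₂, rfl⟩ hD
  obtain ⟨L₁, L₂, L₃, rfl⟩ := hD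
  exact ⟨_, h.isLooseWalk_reroute hHE hins₀ hins₁ hC, h.newVerts_reroute hins₀ hins₁,
    fun s => insertCount_le_insertCount_reroute, fun s => swapCount_reroute hins₀ hins₁⟩

theorem card_sum_slots_filter_swappable :
    Multiset.card ((D.filter fun l => l.Swappable H s).map Link.slot).sum = swapCount H s D := by
  induction D with
  | nil => rfl
  | cons l D ih =>
    rw [swapCount] at ih
    by_cases hl : l.Swappable H s
    · simp [swapCount, hl, ih, hl.1, add_comm]
    · simp [swapCount, hl, ih]

theorem IsLoosePath.exists_card_eq_swapCount (h : IsLoosePath E a D b) (s : V) :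
    ∃ Y : Finset V, #Y = swapCount H s D ∧ ∀ y ∈ Y, ∃ l ∈ D, l.slot = {y} ∧
      IsEdge H (l.source ::ₘ l.target ::ₘ s ::ₘ l.body) := by
  have hnodup : ((D.filter fun l => l.Swappable H s).map Link.slot).sum.Nodup :=
    Multiset.nodup_of_le
      ((List.filter_sublist.map Link.slot).sum_le_sum fun _ _ => zero_le) h.nodup_slots
  refine ⟨⟨_, hnodup⟩, card_sum_slots_filter_swappable, fun y hy => ?_⟩
  rw [mem_mk, ← Multiset.sum_coe] at hy
  obtain ⟨_, hmap, hyl⟩ := Multiset.mem_join.1 hy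
  obtain ⟨l, hl, rfl⟩ := List.mem_map.1 (Multiset.mem_coe.1 hmap)
  obtain ⟨hlD, hcard, hedge⟩ : l ∈ D ∧ l.Swappable H s := by simpa using hl
  obtain ⟨z, hz⟩ := Multiset.card_eq_one.1 hcard
  rw [hz, Multiset.mem_singleton] at hyl
  exact ⟨l, hlD, hyl ▸ hz, hedge⟩

theorem exists_eq_cons_map_univ_add (hU : r < Multiset.card U) :
    ∃ (w : V) (v : Fin r → V) (U' : Multiset V), U = w ::ₘ (univ.val.map v + U') := by
  induction U using Quotient.inductionOn with | _ L =>
  obtain _ | ⟨w, L⟩ := L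
  · simp at hU
  · have hL : r ≤ L.length := by simpa [Nat.lt_succ_iff] using hU
    refine ⟨w, fun j => L[j], L.drop r, ?_⟩
    have htake : List.ofFn (fun j : Fin r => L[j]) = L.take r :=
      List.ext_getElem (by simpa using hL) (by simp)
    rw [Fin.univ_val_map, htake, Multiset.coe_add, List.take_append_drop]
    rfl

variable [DecidableEq V]

theorem IsLoosePath.exists_absorb_of_le_countP {v : Fin r → V} (hG : HasCrossingEdges G N (r + 2))
    (h : IsLoosePath (H ∪ G) a D b) (hins : N ≤ D.countP (fun l => l.Insertable H w))
    (hswap : ∀ j, N ≤ swapCount H (v j) D) :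
    ∃ D', IsLooseWalk (H ∪ G) a D' b ∧ newVerts D' = w ::ₘ (univ.val.map v + newVerts D) ∧
      (∀ s, insertCount H s D ≤ insertCount H s D' + 4) ∧
      ∀ s, swapCount H s D' = swapCount H s D := by
  set X := ((D.filter fun l => l.Insertable H w).map Link.target).toFinset with hX
  have hXcard : N ≤ #X := by
    rw [hX, List.toFinset_card_of_nodup]
    · rwa [List.length_map, ← List.countP_eq_length_filter]
    · exact h.nodup_targets.sublist (List.filter_sublist.map _)
  have hXD : ∀ x ∈ X, ∃ l ∈ D, l.Insertable H w ∧ l.target = x := by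
    simp [hX, and_assoc]
  choose Y hYcard hY using fun j => h.exists_card_eq_swapCount (H := H) (v j)
  obtain ⟨x, hx, y, hy, c, hc, hedge⟩ := hG.exists_isEdge_cons_cons (C := Y) hXcard hXcard
    fun j => (hswap j).trans_eq (hYcard j).symm
  obtain ⟨hxy, -, hcnodup⟩ : x ∉ y ::ₘ univ.val.map c ∧ y ∉ univ.val.map c ∧
      (univ.val.map c).Nodup := by simpa only [Multiset.nodup_cons] using hedge.nodup
  obtain ⟨D₁, hD₁, hnew₁, hins₁, hswap₁, hmem⟩ := h.1.exists_swap_of_injOn subset_union_left univ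
    (fun i hi j hj => Multiset.inj_on_of_nodup_map hcnodup i hi j hj) fun j _ => hY j _ (hc j)
  obtain ⟨l₀, hl₀, hins₀, rfl⟩ := hXD x hx
  obtain ⟨l₁, hl₁, hins₁', rfl⟩ := hXD y hy
  obtain ⟨D₂, hD₂, hnew₂, hins₂, hswap₂⟩ := hD₁.exists_insert subset_union_left
    (hmem l₀ hl₀ hins₀.1) (hmem l₁ hl₁ hins₁'.1)
    (fun heq => hxy (heq ▸ Multiset.mem_cons_self _ _)) hins₀ hins₁'
    (hedge.mono subset_union_right)
  exact ⟨D₂, hD₂, by rw [hnew₂, hnew₁], fun s => hins₁ s ▸ hins₂ s,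
    fun s => (hswap₂ s).trans (hswap₁ s)⟩

theorem IsLoosePath.exists_absorb {v : Fin r → V} (hG : HasCrossingEdges G N (r + 2))
    (h : IsLoosePath (H ∪ G) a D b) (hins : 2 * N ≤ insertCount H w D)
    (hswap : ∀ j, N ≤ swapCount H (v j) D) :
    ∃ D', IsLooseWalk (H ∪ G) a D' b ∧ newVerts D' = w ::ₘ (univ.val.map v + newVerts D) ∧
      (∀ s, insertCount H s D ≤ insertCount H s D' + 4) ∧
      ∀ s, swapCount H s D' = swapCount H s D := by
  by_cases hD : N ≤ D.countP (fun l => l.Insertable H w)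
  · exact h.exists_absorb_of_le_countP hG hD hswap
  obtain ⟨D', hD', hnew, hins', hswap'⟩ := h.reverse.exists_absorb_of_le_countP (w := w) (v := v) hG
    (by rw [insertCount] at hins; lia) (by simpa only [swapCount_reversal] using hswap)
  refine ⟨reversal D', hD'.reverse, ?_, fun s => ?_, fun s => ?_⟩
  · rw [← Multiset.cons_inj_right a, ← hD'.cons_newVerts_eq, hnew, Multiset.cons_swap,
      Multiset.cons_swap a, ← Multiset.add_cons, ← h.1.cons_newVerts_eq, Multiset.add_cons]
  · rw [insertCount_reversal, ← insertCount_reversal (D := D)]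
    exact hins' s
  · rw [swapCount_reversal, hswap', swapCount_reversal]

theorem IsLoosePath.exists_absorb_multiset (hG : HasCrossingEdges G N (r + 2))
    (h : IsLoosePath (H ∪ G) a D b) (hU : Multiset.card U = (r + 1) * t)
    (hnodup : (U + a ::ₘ newVerts D).Nodup) (hins : ∀ s ∈ U, 2 * N + 4 * t ≤ insertCount H s D)
    (hswap : 0 < r → ∀ s ∈ U, N ≤ swapCount H s D) :
    ∃ D', IsLooseWalk (H ∪ G) a D' b ∧ newVerts D' = U + newVerts D := by
  induction t generalizing D U with
  | zero =>
    obtain rfl := Multiset.card_eq_zero.1 hU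
    exact ⟨D, h.1, (zero_add _).symm⟩
  | succ t ih =>
    obtain ⟨w, v, U, rfl⟩ := exists_eq_cons_map_univ_add (r := r) (U := U) (by rw [hU]; nlinarith)
    obtain ⟨D₁, hD₁, hnew₁, hins₁, hswap₁⟩ := h.exists_absorb (w := w) (v := v) hG
      ((hins w (by simp)).trans' (by lia))
      fun j => hswap (Fin.pos j) (v j) (by simp)
    have hnodup₁ : (U + a ::ₘ newVerts D₁).Nodup := by
      convert hnodup using 1
      simp only [hnew₁, ← Multiset.singleton_add]
      abel
    obtain ⟨D₂, hD₂, hnew₂⟩ := ih ⟨hD₁, (Multiset.nodup_add.1 hnodup₁).2.1⟩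
      (by simp only [Multiset.card_cons, Multiset.card_add, Multiset.card_map, card_val, card_univ,
            Fintype.card_fin] at hU
          lia) hnodup₁
      (fun s hs => by
        have := hins s (by simp [hs])
        have := hins₁ s
        lia)
      fun hr s hs => (hswap₁ s).symm ▸ hswap hr s (by simp [hs])
    refine ⟨D₂, hD₂, ?_⟩
    simp only [hnew₂, hnew₁, ← Multiset.singleton_add]
    abel

end Absorption

section HamiltonCycles

variable {V : Type*}

/-- The vertices of a walk, in order and without its end; the inner vertices of each link come
after its source, in an arbitrary order. -/
noncomputable def vertexList (D : List (Link V)) : List V :=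
  D.flatMap fun l => l.source :: (l.slot + l.body).toList

variable {E : Finset (Finset V)} {D : List (Link V)} {a b : V} {i r : ℕ} {l : Link V}

theorem vertexList_cons :
    vertexList (l :: D) = l.source :: (l.slot + l.body).toList ++ vertexList D :=
  List.flatMap_cons

theorem IsLooseWalk.getD_vertexList_zero (h : IsLooseWalk E a D b) :
    (vertexList D).getD 0 b = a := by
  cases D with
  | nil => exact h.symm
  | cons l D => simpa [vertexList_cons] using h.1

theorem IsLooseWalk.cons_coe_vertexList (h : IsLooseWalk E a D b) :
    b ::ₘ (vertexList D : Multiset V) = a ::ₘ newVerts D := by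
  induction D generalizing a with
  | nil => exact congrArg ({·}) h.symm
  | cons l D ih =>
    rw [vertexList_cons, ← Multiset.coe_add, ← Multiset.cons_coe, Multiset.coe_toList,
      ← Multiset.add_cons, ih h.2.2, h.1, newVerts_cons, Link.newVerts]
    simp only [← Multiset.singleton_add]
    abel

theorem IsLooseWalk.length_vertexList (hE : (E : Set (Finset V)).Sized (r + 2))
    (h : IsLooseWalk E a D b) : (vertexList D).length = (r + 1) * D.length := by
  have hcard := congrArg Multiset.card h.cons_coe_vertexList
  simp only [Multiset.card_cons, Multiset.coe_card, h.card_newVerts hE] at hcard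
  exact Nat.succ_injective hcard

theorem IsLooseWalk.isEdge_take_drop (hE : (E : Set (Finset V)).Sized (r + 2))
    (h : IsLooseWalk E a D b) (hi : i < D.length) :
    IsEdge E (((vertexList D ++ [b]).drop (i * (r + 1))).take (r + 2)) := by
  induction D generalizing a i with
  | nil => exact absurd hi (Nat.not_lt_zero i)
  | cons l D ih =>
    obtain ⟨rfl, hedge, hD⟩ := h
    have hlen : (l.source :: (l.slot + l.body).toList).length = r + 1 := by
      simpa [Link.newVerts, ← add_assoc] using hedge.card_eq hE
    rw [vertexList_cons, List.append_assoc]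
    cases i with
    | zero =>
      obtain ⟨T, hT⟩ : ∃ T, vertexList D ++ [b] = l.target :: T := by
        cases hD' : vertexList D with
        | nil => exact ⟨[], by simpa [hD'] using hD.getD_vertexList_zero⟩
        | cons v T => exact ⟨T ++ [b], by simpa [hD'] using hD.getD_vertexList_zero⟩
      rw [zero_mul, List.drop_zero, hT,
        show r + 2 = (l.source :: (l.slot + l.body).toList).length + 1 by rw [hlen],
        List.take_length_add_append]
      convert hedge using 1
      rw [List.take_succ_cons, List.take_zero, ← Multiset.coe_add, ← Multiset.cons_coe,
        Multiset.coe_toList, Multiset.coe_singleton, Link.newVerts, Multiset.cons_add,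
        Multiset.add_comm, Multiset.singleton_add]
    | succ i =>
      rw [Nat.succ_mul, Nat.add_comm (i * _), ← List.drop_drop, List.drop_left' hlen]
      exact ih hD (Nat.lt_of_succ_lt_succ hi)

theorem image_range_getD [DecidableEq V] (L : List V) {k : ℕ} (hk : i + k ≤ L.length) :
    (range k).image (fun j => L.getD (i + j) a) = ((L.drop i).take k).toFinset := by
  ext v
  simp only [mem_image, mem_range, List.mem_toFinset, List.mem_iff_getElem, List.getElem_take,
    List.getElem_drop, List.length_take, List.length_drop]
  constructor
  · rintro ⟨j, hj, rfl⟩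
    exact ⟨j, by lia, (List.getD_eq_getElem _ _ (by lia)).symm⟩
  · rintro ⟨j, hj, rfl⟩
    exact ⟨j, by lia, List.getD_eq_getElem _ _ (by lia)⟩

theorem IsLooseWalk.isHamCycle {n : ℕ} {E : Finset (Finset (Fin n))} {a : Fin n}
    {D : List (Link (Fin n))} (hE : (E : Set (Finset (Fin n))).Sized (r + 2))
    (h : IsLooseWalk E a D a) (hD : newVerts D = univ.val) : IsHamCycle n (r + 2) 1 E := by
  have : NeZero n := ⟨(Nat.zero_le _).trans_lt a.2 |>.ne'⟩
  have huniv : (vertexList D : Multiset (Fin n)) = univ.val :=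
    ((Multiset.cons_inj_right a).1 h.cons_coe_vertexList).trans hD
  have hlen : (vertexList D).length = n := by simpa using congrArg Multiset.card huniv
  have hDlen : n = (r + 1) * D.length := hlen.symm.trans (h.length_vertexList hE)
  have happend : ∀ m, (vertexList D ++ [a]).getD m a = (vertexList D).getD m a := by
    intro m
    obtain hm | hm := lt_or_ge m (vertexList D).length
    · exact List.getD_append _ _ _ _ hm
    · rw [List.getD_append_right _ _ _ _ hm, List.getD_eq_default _ _ hm]
      exact List.getElem?_getD_singleton_default_eq _ _
  have hcast : ∀ m ≤ n, (vertexList D).getD (m : ZMod n).val a = (vertexList D).getD m a := by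
    intro m hm
    obtain hm | rfl := hm.lt_or_eq
    · rw [ZMod.val_natCast_of_lt hm]
    · rw [ZMod.natCast_self, ZMod.val_zero, h.getD_vertexList_zero,
        List.getD_eq_default _ _ hlen.le]
  refine ⟨fun m => (vertexList D).getD m.val a,
    (Fintype.bijective_iff_surjective_and_card _).2 ⟨fun v => ?_, by simp⟩, fun i hi => ?_⟩
  · obtain ⟨m, hm, rfl⟩ : ∃ m, ∃ hm : m < (vertexList D).length, (vertexList D)[m] = v :=
      List.mem_iff_getElem.1 (Multiset.mem_coe.1 (huniv ▸ mem_univ_val v))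
    exact ⟨m, (hcast m (hm.le.trans_eq hlen)).trans (List.getD_eq_getElem _ _ hm)⟩
  · change i < n / (r + 1) at hi
    rw [hDlen, Nat.mul_div_cancel_left _ r.succ_pos] at hi
    have hle : i * (r + 1) + (r + 2) ≤ n + 1 := by rw [hDlen]; nlinarith
    have hwindow := (isEdge_iff_toFinset_mem.1 (h.isEdge_take_drop hE hi)).2
    rw [List.toFinset_coe, ← image_range_getD (a := a) _ (by simpa [hlen] using hle)] at hwindow
    convert hwindow using 1
    refine image_congr fun j hj => (hcast _ ?_).trans (happend _).symm
    have := mem_range.1 hj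
    lia

end HamiltonCycles

section DeterministicCriterion

variable {V : Type*} [Fintype V] {H G E : Finset (Finset V)} {D L : List (Link V)}
  {N d m r : ℕ} {a c : V}

theorem IsLoosePath.exists_leftover (hD : IsLoosePath E a D c)
    (hL : IsLooseWalkThrough E {u | u ∉ a ::ₘ newVerts D} c L a) :
    ∃ U : Multiset V, U + (newVerts D + newVerts L) = univ.val ∧ (U + a ::ₘ newVerts D).Nodup := by
  obtain ⟨-, M, hM, hMnodup, hMD⟩ := hL
  have hadd : newVerts D + newVerts L = a ::ₘ newVerts D + M := by
    rw [hM, Multiset.add_cons, Multiset.cons_add]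
  have hnodup : (newVerts D + newVerts L).Nodup := by
    rw [hadd]
    exact Multiset.nodup_add.2 ⟨hD.2, hMnodup, Multiset.disjoint_right.2 fun hu => hMD _ hu⟩
  obtain ⟨U, hU⟩ := le_iff_exists_add'.1
    ((Multiset.le_iff_subset hnodup).2 fun u _ => mem_univ_val u)
  refine ⟨U, hU.symm, Multiset.nodup_of_le ?_ (univ : Finset V).nodup⟩
  rw [hU, hadd, ← add_assoc]
  exact Multiset.le_add_right _ _

theorem exists_isLooseWalk_newVerts_eq_univ [DecidableEq V] (hG : HasCrossingEdges G N (r + 2))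
    (hGsized : (G : Set (Finset V)).Sized (r + 2)) (hH : (H : Set (Finset V)).Sized (r + 2))
    (hdvd : r + 1 ∣ Fintype.card V) (hd : ∀ S : Finset V, #S = r + 1 → d ≤ #(nbrs H S))
    (hdV : d ≤ Fintype.card V) (hN₀ : 0 < N) (hN : 20 * ((r + 1) * N) ≤ d) (hm₀ : 0 < m)
    (hm : 4 * (1 + 8 * (r + 1) * m) ≤ d)
    (hsmall : Fintype.card V * (1 - d / (4 * Fintype.card V) : ℝ) ^ m < (1 / 2) ^ (38 * N)) :
    ∃ a D, IsLooseWalk (H ∪ G) a D a ∧ newVerts D = univ.val := by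
  have hsized : ((H ∪ G : Finset _) : Set (Finset V)).Sized (r + 2) := by
    rw [coe_union]
    exact Set.sized_union.2 ⟨hH, hGsized⟩
  obtain ⟨a, D, c, hD, hac, hDlen, habsorb⟩ :=
    exists_absorbing_isLoosePath hG hGsized hH hd hdV (by lia) hN₀ hm₀ hm hsmall
  have hDcard : #(a ::ₘ newVerts D).toFinset = (r + 1) * D.length + 1 := by
    rw [Multiset.toFinset_card_of_nodup hD.2, Multiset.card_cons, hD.1.card_newVerts hsized]
  obtain ⟨L, hL, hLlen⟩ := exists_long_isLooseWalkThrough_compl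
    (F := (a ::ₘ newVerts D).toFinset) hGsized hG hN₀ hd hdV hac (by simp)
    (Multiset.mem_toFinset.2 hD.1.end_mem) (by rw [hDcard]; nlinarith)
  have hcompl : (↑(a ::ₘ newVerts D).toFinset : Set V)ᶜ = {u | u ∉ a ::ₘ newVerts D} := by
    ext u
    simp
  obtain ⟨U, hU, hUnodup⟩ := hD.exists_leftover (hcompl ▸ hL)
  have hUcard : Multiset.card U + (r + 1) * (D.length + L.length) = Fintype.card V := by
    simpa only [Multiset.card_add, hD.1.card_newVerts hsized, hL.1.card_newVerts hsized, mul_add,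
      card_val, card_univ]
      using congrArg Multiset.card hU
  obtain ⟨t, ht⟩ : r + 1 ∣ Multiset.card U :=
    (Nat.dvd_add_left (dvd_mul_right _ _)).1 (hUcard ▸ hdvd)
  have htN : t ≤ 9 * N := by
    rw [hDcard] at hLlen
    nlinarith
  have hnot : ∀ s ∈ U, s ∉ a ::ₘ newVerts D := fun s hs =>
    Multiset.disjoint_left.1 (Multiset.nodup_add.1 hUnodup).2.2 hs
  obtain ⟨D', hD', hnew⟩ := hD.exists_absorb_multiset hG ht hUnodup
    (fun s hs => le_add_right ((habsorb s (hnot s hs)).1.trans' (by lia)))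
    fun hr s hs => ((habsorb s (hnot s hs)).2 hr).trans' (by lia)
  refine ⟨a, D' ++ L, isLooseWalk_append.2 ⟨c, hD', hL.1⟩, ?_⟩
  rw [newVerts_append, hnew, add_assoc, hU]

variable {n : ℕ} {H G : Finset (Finset (Fin n))}

theorem sized_of_subset_kSets {k : ℕ} (hH : H ⊆ kSets n k) :
    (H : Set (Finset (Fin n))).Sized k := fun _ he => (mem_powersetCard.1 (hH he)).2

theorem degOf_le_card_nbrs (hH : (H : Set (Finset (Fin n))).Sized (r + 1)) {S : Finset (Fin n)}
    (hS : #S = r) : degOf H S ≤ #(nbrs H S) := by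
  refine (card_le_card (t := (nbrs H S).image (insert · S)) fun e he => ?_).trans card_image_le
  obtain ⟨heH, hSe⟩ := mem_filter.1 he
  obtain ⟨x, hx⟩ : ∃ x, e \ S = {x} :=
    card_eq_one.1 (by rw [card_sdiff_of_subset hSe, hH heH, hS, Nat.add_sub_cancel_left])
  have hxS : x ∉ S := (mem_sdiff.1 (hx ▸ mem_singleton_self x)).2
  have hinsert : insert x S = e := by rw [insert_eq, ← hx, sdiff_union_of_subset hSe]
  exact mem_image.2 ⟨x, by simp [nbrs, hxS, hinsert, heH], hinsert⟩

theorem HasCrossingEdges.isHamCycle_union (hG : HasCrossingEdges G N (r + 2))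
    (hGsub : G ⊆ kSets n (r + 2)) (hH : H ⊆ kSets n (r + 2)) (hdvd : r + 1 ∣ n)
    (hd : ∀ S : Finset (Fin n), #S = r + 1 → d ≤ degOf H S) (hdn : d ≤ n) (hN₀ : 0 < N)
    (hN : 20 * ((r + 1) * N) ≤ d) (hm₀ : 0 < m) (hm : 4 * (1 + 8 * (r + 1) * m) ≤ d)
    (hsmall : n * (1 - d / (4 * n) : ℝ) ^ m < (1 / 2) ^ (38 * N)) :
    IsHamCycle n (r + 2) 1 (H ∪ G) := by
  have hHsized := sized_of_subset_kSets hH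
  obtain ⟨a, D, hD, hnew⟩ := exists_isLooseWalk_newVerts_eq_univ (d := d) (m := m) hG
    (sized_of_subset_kSets hGsub) hHsized (by rwa [Fintype.card_fin])
    (fun S hS => (hd S hS).trans (degOf_le_card_nbrs hHsized hS)) (by rwa [Fintype.card_fin]) hN₀ hN
    hm₀ hm (by rwa [Fintype.card_fin])
  exact hD.isHamCycle (sized_of_subset_kSets (union_subset hH hGsub)) hnew

end DeterministicCriterion

section RandomHypergraph

variable {n k N : ℕ} {p : ℝ} {P Q : Finset (Finset (Fin n)) → Prop}

theorem gProb_eq_sum_ite (n k : ℕ) (p : ℝ) (P : Finset (Finset (Fin n)) → Prop) :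
    gProb n k p P = ∑ E ∈ (kSets n k).powerset,
      if P E then p ^ #E * (1 - p) ^ (#(kSets n k) - #E) else 0 :=
  sum_filter _ _

theorem gProb_mono (hp₀ : 0 ≤ p) (hp₁ : p ≤ 1) (h : ∀ E ⊆ kSets n k, P E → Q E) :
    gProb n k p P ≤ gProb n k p Q :=
  sum_le_sum_of_subset_of_nonneg
    (fun E hE => mem_filter.2
      ⟨(mem_filter.1 hE).1, h E (mem_powerset.1 (mem_filter.1 hE).1) (mem_filter.1 hE).2⟩)
    fun _ _ _ => mul_nonneg (pow_nonneg hp₀ _) (pow_nonneg (sub_nonneg.2 hp₁) _)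

theorem gProb_add_gProb_not : gProb n k p P + gProb n k p (fun E => ¬P E) = 1 := by
  rw [gProb, gProb, sum_filter_add_sum_filter_not, sum_pow_mul_eq_add_pow, add_sub_cancel, one_pow]

theorem gProb_exists_le_sum {ι : Type*} (hp₀ : 0 ≤ p) (hp₁ : p ≤ 1) (s : Finset ι)
    (P : ι → Finset (Finset (Fin n)) → Prop) :
    gProb n k p (fun E => ∃ i ∈ s, P i E) ≤ ∑ i ∈ s, gProb n k p (P i) := by
  simp only [gProb_eq_sum_ite]
  rw [sum_comm]
  refine sum_le_sum fun E _ => ?_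
  have hnonneg : ∀ i ∈ s, 0 ≤ if P i E then p ^ #E * (1 - p) ^ (#(kSets n k) - #E) else 0 := by
    intro i _
    split_ifs
    exacts [mul_nonneg (pow_nonneg hp₀ _) (pow_nonneg (sub_nonneg.2 hp₁) _), le_rfl]
  split_ifs with h
  · obtain ⟨i, hi, hP⟩ := h
    exact (if_pos hP).symm.trans_le (single_le_sum hnonneg hi)
  · exact sum_nonneg hnonneg

theorem gProb_disjoint {T : Finset (Finset (Fin n))} (hT : T ⊆ kSets n k) :
    gProb n k p (fun E => Disjoint E T) = (1 - p) ^ #T := by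
  calc gProb n k p (fun E => Disjoint E T)
      = ∑ E ∈ (kSets n k \ T).powerset,
          p ^ #E * (1 - p) ^ (#(kSets n k \ T) - #E) * (1 - p) ^ #T := by
        rw [gProb]
        refine sum_congr (by ext E; simp only [mem_filter, mem_powerset, subset_sdiff]) ?_
        intro E hE
        have hcard := card_le_card (mem_powerset.1 hE)
        rw [← card_sdiff_add_card_eq_card hT, mul_assoc, ← pow_add, Nat.sub_add_comm hcard]
    _ = (1 - p) ^ #T := by
        rw [← sum_mul, sum_pow_mul_eq_add_pow, add_sub_cancel, one_pow, one_mul]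

/-- The vertex sets of the systems of representatives of the sets `B j`. -/
def transversals (B : Fin k → Finset (Fin n)) : Finset (Finset (Fin n)) :=
  (Fintype.piFinset B).image fun c => univ.image c

variable {B : Fin k → Finset (Fin n)}

theorem card_transversals (hB : Pairwise (Function.onFun Disjoint B)) :
    #(transversals B) = ∏ j, #(B j) := by
  rw [transversals, card_image_of_injOn, Fintype.card_piFinset]
  intro c hc c' hc' h
  change univ.image c = univ.image c' at h
  simp only [mem_coe, Fintype.mem_piFinset] at hc hc'
  funext i
  obtain ⟨j, -, hj⟩ := mem_image.1 (h ▸ mem_image_of_mem c (mem_univ i) : c i ∈ univ.image c')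
  obtain rfl : i = j := hB.eq (not_disjoint_iff.2 ⟨c i, hc i, hj ▸ hc' j⟩)
  exact hj.symm

theorem transversals_subset_kSets (hB : Pairwise (Function.onFun Disjoint B)) :
    transversals B ⊆ kSets n k := by
  intro e he
  obtain ⟨c, hc, rfl⟩ := mem_image.1 he
  rw [Fintype.mem_piFinset] at hc
  have hinj : Function.Injective c := fun i j hij =>
    hB.eq (not_disjoint_iff.2 ⟨c i, hc i, hij ▸ hc j⟩)
  exact mem_powersetCard.2
    ⟨subset_univ _, by rw [card_image_of_injective _ hinj, card_univ, Fintype.card_fin]⟩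

theorem hasCrossingEdges_of_not_disjoint_transversals {E : Finset (Finset (Fin n))}
    (h : ∀ B : Fin k → Finset (Fin n), (∀ j, #(B j) = N) → Pairwise (Function.onFun Disjoint B) →
      ¬Disjoint E (transversals B)) :
    HasCrossingEdges E (k * N) k := by
  refine hasCrossingEdges_of_pairwise_disjoint fun B hBcard hB => ?_
  obtain ⟨_, heE, heB⟩ := not_disjoint_iff.1 (h B hBcard hB)
  obtain ⟨c, hc, rfl⟩ := mem_image.1 heB
  exact ⟨c, Fintype.mem_piFinset.1 hc, heE⟩

theorem one_sub_le_gProb_hasCrossingEdges (hp₀ : 0 ≤ p) (hp₁ : p ≤ 1) :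
    1 - 2 ^ (n * k) * (1 - p) ^ N ^ k ≤ gProb n k p (fun E => HasCrossingEdges E (k * N) k) := by
  let families : Finset (Fin k → Finset (Fin n)) :=
    {B | (∀ j, #(B j) = N) ∧ Pairwise (Function.onFun Disjoint B)}
  have hcard : (#families : ℝ) ≤ 2 ^ (n * k) := by
    have h : #families ≤ _ := card_le_univ _
    rw [Fintype.card_pi_const, Fintype.card_finset, Fintype.card_fin, ← pow_mul] at h
    exact_mod_cast h
  have hfail : gProb n k p (fun E => ¬HasCrossingEdges E (k * N) k) ≤
      2 ^ (n * k) * (1 - p) ^ N ^ k := calc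
    _ ≤ gProb n k p (fun E => ∃ B ∈ families, Disjoint E (transversals B)) := by
      refine gProb_mono hp₀ hp₁ fun E _ h => ?_
      by_contra! hE
      exact h (hasCrossingEdges_of_not_disjoint_transversals fun B hBcard hB =>
        hE B (mem_filter_univ B |>.2 ⟨hBcard, hB⟩))
    _ ≤ ∑ B ∈ families, gProb n k p (fun E => Disjoint E (transversals B)) :=
      gProb_exists_le_sum hp₀ hp₁ _ _
    _ = #families * (1 - p) ^ N ^ k := by
      rw [← nsmul_eq_mul]
      refine sum_eq_card_nsmul fun B hB => ?_
      obtain ⟨hBcard, hB⟩ := (mem_filter_univ B).1 hB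
      rw [gProb_disjoint (transversals_subset_kSets hB), card_transversals hB]
      simp [hBcard]
    _ ≤ 2 ^ (n * k) * (1 - p) ^ N ^ k :=
      mul_le_mul_of_nonneg_right hcard (pow_nonneg (sub_nonneg.2 hp₁) _)
  linarith [gProb_add_gProb_not (n := n) (k := k) (p := p)
    (P := fun E => HasCrossingEdges E (k * N) k)]

end RandomHypergraph

section Asymptotics

open Filter Real

theorem mul_one_sub_pow_lt_half_pow {n m M : ℕ} {q : ℝ} (hq : q ≤ 1)
    (h : n * exp (M - q * m) < 1) : n * (1 - q) ^ m < (1 / 2) ^ M := by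
  have hupper : (1 - q) ^ m ≤ exp (-(q * m)) := calc
    (1 - q) ^ m ≤ exp (-q) ^ m :=
      pow_le_pow_left₀ (sub_nonneg.2 hq) (one_sub_le_exp_neg q) m
    _ = exp (-(q * m)) := by rw [← exp_nat_mul]; ring_nf
  have hlower : exp (-M) ≤ (1 / 2) ^ M := calc
    exp (-M) = exp (-1) ^ M := by rw [← exp_nat_mul]; ring_nf
    _ ≤ (1 / 2) ^ M := by
      refine pow_le_pow_left₀ (exp_pos _).le ?_ M
      rw [exp_neg, one_div]
      exact inv_anti₀ two_pos (by linarith [add_one_le_exp 1])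
  calc n * (1 - q) ^ m ≤ n * exp (-(q * m)) := mul_le_mul_of_nonneg_left hupper n.cast_nonneg
    _ = n * exp (M - q * m) * exp (-M) := by rw [mul_assoc, ← exp_add]; ring_nf
    _ < exp (-M) := mul_lt_of_lt_one_left (exp_pos _) h
    _ ≤ (1 / 2) ^ M := hlower

theorem eventually_mul_exp_sub_lt_one {b : ℝ} (hb : 0 < b) (C : ℝ) :
    ∀ᶠ n : ℕ in atTop, n * exp (C - b * n) < 1 := by
  have hlim := ((isLittleO_pow_exp_pos_mul_atTop 1 hb).tendsto_div_nhds_zero.comp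
    tendsto_natCast_atTop_atTop).const_mul (exp C)
  rw [mul_zero] at hlim
  filter_upwards [hlim.eventually_lt_const one_pos] with n hn
  calc n * exp (C - b * n) = exp C * (n ^ 1 / exp (b * n)) := by rw [exp_sub, pow_one]; ring
    _ < 1 := hn

theorem HasCrossingEdges.isHamCycle_union_of_density {r n N : ℕ} {a β : ℝ}
    {G H : Finset (Finset (Fin n))} (ha₀ : 0 < a) (ha₁ : a ≤ 1) (hβ : β = a ^ 2 / (320 * (r + 1)))
    (hG : HasCrossingEdges G N (r + 2)) (hGsub : G ⊆ kSets n (r + 2)) (hH : H ⊆ kSets n (r + 2))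
    (hdvd : r + 1 ∣ n) (hdeg : ∀ S, #S = r + 1 → a * n ≤ degOf H S)
    (hn : 40 * ((r + 1) * (r + 2)) ≤ a * n) (hN₀ : 0 < N) (hN : 38 * N ≤ β * n + 38 * (r + 2))
    (hexp : n * exp (38 * (r + 2) + 1 - β * n) < 1) :
    IsHamCycle n (r + 2) 1 (H ∪ G) := by
  have : (0 : ℝ) ≤ r := r.cast_nonneg
  have hn₀ : (0 : ℝ) < n := pos_of_mul_pos_right (lt_of_lt_of_le (by positivity) hn) ha₀.le
  have han : a * n ≤ n := mul_le_of_le_one_left hn₀.le ha₁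
  let m := ⌊a * n / (40 * (r + 1))⌋₊
  have hm_le : 40 * ((r + 1) * m) ≤ a * n := by
    have h := (le_div_iff₀ (by positivity)).1
      (Nat.floor_le (by positivity : 0 ≤ a * n / (40 * (r + 1))))
    linarith
  have hm_ge : 2 * β * n - 1 ≤ a / 4 * m := calc
    2 * β * n - 1 ≤ a / 4 * (a * n / (40 * (r + 1)) - 1) := by rw [hβ]; field_simp; nlinarith
    _ ≤ a / 4 * m := by gcongr; exact (Nat.sub_one_lt_floor _).le
  have hm₀ : 0 < m := Nat.floor_pos.2 ((one_le_div₀ (by positivity)).2 (by nlinarith))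
  have hdeg_le : a * n ≤ ⌈a * n⌉₊ := Nat.le_ceil _
  have hceil_le : ⌈a * n⌉₊ ≤ n := Nat.ceil_le.2 han
  have hβ_le : (r + 1) * β ≤ a / 320 := by
    rw [hβ]; field_simp; exact ha₁
  refine hG.isHamCycle_union hGsub hH hdvd (fun S hS => Nat.ceil_le.2 (hdeg S hS)) hceil_le hN₀
    ?_ hm₀ ?_ (mul_one_sub_pow_lt_half_pow ?_ ?_)
  · have : 20 * ((r + 1) * (N : ℝ)) ≤ ⌈a * n⌉₊ := by nlinarith
    exact_mod_cast this
  · have : 4 * (1 + 8 * (r + 1) * (m : ℝ)) ≤ ⌈a * n⌉₊ := by nlinarith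
    exact_mod_cast this
  · rw [div_le_one (by positivity)]
    linarith [(Nat.cast_le (α := ℝ)).2 hceil_le]
  · refine lt_of_le_of_lt (mul_le_mul_of_nonneg_left (exp_le_exp.2 ?_) hn₀.le) hexp
    have hq : a / 4 ≤ ⌈a * n⌉₊ / (4 * n) := by
      rw [div_le_div_iff₀ four_pos (by positivity)]
      linarith
    have hqm := mul_le_mul_of_nonneg_right hq m.cast_nonneg
    push_cast
    linarith

theorem eventually_isHamCycle_union (r : ℕ) {α : ℝ} (hα : 0 < α) :
    ∃ ε : ℝ, 0 < ε ∧ ∀ᶠ n : ℕ in atTop, r + 1 ∣ n → ∀ G H : Finset (Finset (Fin n)),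
      G ⊆ kSets n (r + 2) → H ⊆ kSets n (r + 2) → (∀ S, #S = r + 1 → α * n ≤ degOf H S) →
      HasCrossingEdges G ((r + 2) * ⌈ε * n⌉₊) (r + 2) → IsHamCycle n (r + 2) 1 (H ∪ G) := by
  let a := min α 1
  have ha₀ : 0 < a := lt_min hα one_pos
  let β := a ^ 2 / (320 * (r + 1))
  have hβ₀ : 0 < β := by positivity
  have hε₀ : 0 < β / (38 * (r + 2)) := by positivity
  refine ⟨β / (38 * (r + 2)), hε₀, ?_⟩
  filter_upwards [eventually_gt_atTop 0,
    (tendsto_natCast_atTop_atTop.const_mul_atTop ha₀).eventually_ge_atTop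
      (40 * ((r + 1) * (r + 2) : ℝ)),
    eventually_mul_exp_sub_lt_one hβ₀ (38 * (r + 2) + 1)]
    with n hn₀ hn hexp hdvd G H hGsub hH hdeg hG
  have : 0 < ⌈β / (38 * (r + 2)) * n⌉₊ := Nat.ceil_pos.2 (by positivity)
  refine hG.isHamCycle_union_of_density ha₀ (min_le_right _ _) rfl hGsub hH hdvd
    (fun S hS => le_trans ?_ (hdeg S hS)) hn (by positivity) ?_ hexp
  · exact mul_le_mul_of_nonneg_right (min_le_left _ _) n.cast_nonneg
  · have hceil := Nat.ceil_lt_add_one (mul_nonneg hε₀.le n.cast_nonneg)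
    push_cast
    calc 38 * ((r + 2) * (⌈β / (38 * (r + 2)) * n⌉₊ : ℝ))
        ≤ 38 * ((r + 2) * (β / (38 * (r + 2)) * n + 1)) := by gcongr
      _ = β * n + 38 * (r + 2) := by field_simp

theorem two_pow_mul_one_sub_pow_le_exp_neg {n r N : ℕ} {ε p : ℝ} (hε : 0 < ε) (hp₁ : p ≤ 1)
    (hp : p = (r + 3) / ε ^ (r + 2) / n ^ (r + 1)) (hn : 0 < n) (hN : ε * n ≤ N) :
    2 ^ (n * (r + 2)) * (1 - p) ^ N ^ (r + 2) ≤ exp (-n) := by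
  have hp₀ : 0 ≤ p := by rw [hp]; positivity
  have htwo : (2 : ℝ) ^ (n * (r + 2)) ≤ exp (n * (r + 2)) := calc
    (2 : ℝ) ^ (n * (r + 2)) ≤ exp 1 ^ (n * (r + 2)) :=
      pow_le_pow_left₀ zero_le_two (by linarith [add_one_le_exp 1]) _
    _ = exp (n * (r + 2)) := by rw [← exp_nat_mul]; push_cast; ring_nf
  have hmean : n * (r + 3) ≤ (N : ℝ) ^ (r + 2) * p := calc
    n * (r + 3) = (ε * n) ^ (r + 2) * p := by rw [hp]; field_simp; ring
    _ ≤ (N : ℝ) ^ (r + 2) * p := by gcongr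
  have hmiss : (1 - p) ^ N ^ (r + 2) ≤ exp (-(n * (r + 3))) := calc
    (1 - p) ^ N ^ (r + 2) ≤ exp (-p) ^ N ^ (r + 2) :=
      pow_le_pow_left₀ (sub_nonneg.2 hp₁) (one_sub_le_exp_neg p) _
    _ = exp (-((N : ℝ) ^ (r + 2) * p)) := by rw [← exp_nat_mul]; push_cast; ring_nf
    _ ≤ exp (-(n * (r + 3))) := exp_le_exp.2 (neg_le_neg hmean)
  calc 2 ^ (n * (r + 2)) * (1 - p) ^ N ^ (r + 2)
      ≤ exp (n * (r + 2)) * exp (-(n * (r + 3))) := by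
        gcongr
    _ = exp (-n) := by rw [← exp_add]; ring_nf

theorem exists_eventually_one_sub_le_gProb_hasCrossingEdges (r : ℕ) {ε : ℝ} (hε : 0 < ε) :
    ∃ c : ℝ, 0 < c ∧ ∀ δ : ℝ, 0 < δ → ∀ᶠ n : ℕ in atTop, c / n ^ (r + 1) ≤ 1 ∧
      1 - δ ≤ gProb n (r + 2) (c / n ^ (r + 1))
        (fun E => HasCrossingEdges E ((r + 2) * ⌈ε * n⌉₊) (r + 2)) := by
  let c := (r + 3) / ε ^ (r + 2)
  refine ⟨c, by positivity, fun δ hδ => ?_⟩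
  have hp_lim : Tendsto (fun n : ℕ => c / (n : ℝ) ^ (r + 1)) atTop (nhds 0) :=
    ((tendsto_pow_atTop r.succ_ne_zero).comp tendsto_natCast_atTop_atTop).const_div_atTop c
  have hexp_lim : Tendsto (fun n : ℕ => exp (-n)) atTop (nhds 0) :=
    tendsto_exp_neg_atTop_nhds_zero.comp tendsto_natCast_atTop_atTop
  filter_upwards [eventually_gt_atTop 0, hp_lim.eventually_le_const one_pos,
    hexp_lim.eventually_le_const hδ] with n hn hp₁ hexp
  have hfail := two_pow_mul_one_sub_pow_le_exp_neg hε hp₁ rfl hn (Nat.le_ceil (ε * n))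
  refine ⟨hp₁, le_trans ?_ (one_sub_le_gProb_hasCrossingEdges (by positivity) hp₁)⟩
  linarith

end Asymptotics

/-- Theorem 1.1, Krivelevich–Kwan–Sudakov. For `k ≥ 2` and `α > 0`
there is `c_k = c_k(α)` such that for any `k`-graph `H` on `n ∈ (k-1)ℕ` vertices with
`δ_{k-1}(H) ≥ αn` and `p = c_k / n^{k-1}`, a.a.s. `H ∪ G^{(k)}(n,p)` is 1-Hamiltonian. -/
theorem krivelevich_kwan_sudakov
    (k : ℕ) (hk : 2 ≤ k) (α : ℝ) (hα : 0 < α) :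
    ∃ c : ℝ, 0 < c ∧ ∀ δ : ℝ, 0 < δ → ∃ n₀ : ℕ, ∀ n : ℕ, n₀ ≤ n → (k - 1) ∣ n →
      ∀ H : Finset (Finset (Fin n)), H ⊆ kSets n k →
        (∀ S : Finset (Fin n), S.card = k - 1 → α * (n : ℝ) ≤ (degOf H S : ℝ)) →
        1 - δ ≤ gProb n k (c / (n : ℝ) ^ (k - 1))
          (fun E => IsHamCycle n k 1 (H ∪ E)) := by
  obtain ⟨r, rfl⟩ := Nat.exists_eq_add_of_le' hk
  obtain ⟨ε, hε, hham⟩ := eventually_isHamCycle_union r hα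
  obtain ⟨c, hc, hcross⟩ := exists_eventually_one_sub_le_gProb_hasCrossingEdges r hε
  refine ⟨c, hc, fun δ hδ => Filter.eventually_atTop.1 ?_⟩
  filter_upwards [hham, hcross δ hδ] with n hham ⟨hp₁, hcross⟩ hdvd H hH hdeg
  calc 1 - δ ≤ gProb n (r + 2) (c / n ^ (r + 1))
        (fun E => HasCrossingEdges E ((r + 2) * ⌈ε * n⌉₊) (r + 2)) := hcross
    _ ≤ gProb n (r + 2) (c / n ^ (r + 1)) (fun E => IsHamCycle n (r + 2) 1 (H ∪ E)) :=
      gProb_mono (by positivity) hp₁ fun E hE h => hham hdvd E H hE hH hdeg h
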